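/- There exist a finite alphabet α, a state B ∈ α, and a cellular automaton Φ : α^ℤ → α^ℤ with quiescent state B such that Φ is asymptotically nilpotent in density but not uniquely ergodic. -/

import Mathlib

open MeasureTheory Filter

/-- The Besicovitch pseudometric on `α^ℤ`:
`d_B(x,y) = limsup_{n→∞} |{i ∈ [-n,n] : x_i ≠ y_i}| / (2n+1)`. -/
noncomputable def besicovitchDist {α : Type} [DecidableEq α] (x y : ℤ → α) : ℝ :=
  Filter.limsup (fun n : ℕ =>
      (((Finset.Icc (-(n : ℤ)) (n : ℤ)).filter fun i => x i ≠ y i).card : ℝ) /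
        (2 * (n : ℝ) + 1))
    Filter.atTop

/-!
The alphabet consists of an empty cell and finitely many kinds of particles. Each particle carries
a cargo and plays one of two roles. A wall at the left end of a block of four cells and a sweeper
that visits the neighbouring block form a box, and the cargos of the two are the two components of a
single particle of the same automaton, which the box moves by one step of the simulation in 28 time
steps. A wall or a sweeper that does not find its partner dies. Thus every particle that survives
long enough belongs to a box, and the boxes evolve by the same rule on a coarser scale. Going up
`k` levels, a configuration of age `O(28 ^ k)` has at most `2 ^ k` particles for each of the
simulated ones, which need `4 ^ k` cells; so its density is `O(2 ^ (-k))`, uniformly in the initial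
configuration.

Conversely, every configuration in which no two particles interfere is simulated by another one,
and if a particle rests at cell `0`, so does its wall. Starting from one particle, there are
configurations in which cell `0` is occupied for `28 ^ k` steps, and by compactness there is one in
which it is occupied forever. A limit of the occupation measures of its orbit is invariant and gives
measure one to the configurations with occupied cell `0`, unlike the Dirac measure at the empty
configuration.
-/

namespace SelfSimulatingCA

section InvariantMeasures

variable {X : Type*} [MeasurableSpace X]

/-- The uniform probability measure on the first `N + 1` points of the orbit of `x`. -/
noncomputable def occupationMeasure (Ψ : X → X) (x : X) (N : ℕ) : Measure X :=
  ((N + 1 : ℕ) : ENNReal)⁻¹ • ∑ t ∈ Finset.range (N + 1), Measure.dirac (Ψ^[t] x)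

theorem occupationMeasure_eq_one {Ψ : X → X} {x : X} {C : Set X} (hC : MeasurableSet C)
    (hx : ∀ t, Ψ^[t] x ∈ C) (N : ℕ) : occupationMeasure Ψ x N C = 1 := by
  simp only [occupationMeasure, Measure.smul_apply, Measure.coe_finsetSum, Finset.sum_apply,
    Measure.dirac_apply' _ hC, Set.indicator_of_mem (hx _), Pi.one_apply, Finset.sum_const,
    Finset.card_range, smul_eq_mul, nsmul_eq_mul, mul_one]
  exact ENNReal.inv_mul_cancel (by simp) (by simp)

instance (Ψ : X → X) (x : X) (N : ℕ) : IsProbabilityMeasure (occupationMeasure Ψ x N) :=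
  ⟨occupationMeasure_eq_one MeasurableSet.univ (fun _ => Set.mem_univ _) N⟩

theorem integral_occupationMeasure {f : X → ℝ} (hf : StronglyMeasurable f) (Ψ : X → X) (x : X)
    (N : ℕ) : ∫ z, f z ∂occupationMeasure Ψ x N = birkhoffAverage ℝ Ψ f (N + 1) x := by
  rw [occupationMeasure, integral_smul_measure, integral_finsetSum_measure, birkhoffAverage,
    birkhoffSum, ENNReal.toReal_inv, ENNReal.toReal_natCast]
  · simp only [integral_dirac' f _ hf]
  · exact fun t _ => integrable_dirac' hf (by simp)

variable [TopologicalSpace X] [CompactSpace X] [T2Space X] [BorelSpace X] [HasOuterApproxClosed X]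

/-- Krylov–Bogoliubov: any limit point of the occupation measures of an orbit is invariant. -/
theorem exists_measurePreserving_of_forall_iterate_mem {Ψ : X → X} (hΨ : Continuous Ψ)
    {C : Set X} (hC : IsClosed C) {x : X} (hx : ∀ t, Ψ^[t] x ∈ C) :
    ∃ μ : Measure X, IsProbabilityMeasure μ ∧ MeasurePreserving Ψ μ μ ∧ μ C = 1 := by
  let ν (N : ℕ) : ProbabilityMeasure X := ⟨occupationMeasure Ψ x N, inferInstance⟩
  obtain ⟨μ, hlim⟩ : ∃ μ, Tendsto ν (hyperfilter ℕ : Filter ℕ) (nhds μ) :=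
    ⟨_, ((hyperfilter ℕ).map ν).le_nhds_lim⟩
  have hatTop : (hyperfilter ℕ : Filter ℕ) ≤ atTop := Nat.hyperfilter_le_atTop
  refine ⟨μ, inferInstance, ⟨hΨ.measurable, ?_⟩, le_antisymm prob_le_one ?_⟩
  · have := Measure.isProbabilityMeasure_map (μ := (μ : Measure X)) hΨ.measurable.aemeasurable
    refine ext_of_forall_integral_eq_of_IsFiniteMeasure fun f => ?_
    rw [integral_map hΨ.measurable.aemeasurable f.continuous.aestronglyMeasurable]
    have integral_tendsto := ProbabilityMeasure.tendsto_iff_forall_integral_tendsto.1 hlim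
    have hsub := (integral_tendsto (f.compContinuous ⟨Ψ, hΨ⟩)).sub (integral_tendsto f)
    refine sub_eq_zero.1 (tendsto_nhds_unique hsub ?_)
    refine Tendsto.congr (fun N => ?_) (((tendsto_birkhoffAverage_apply_sub_birkhoffAverage' ℝ
      (g := f) f.isBounded_range Ψ x).comp (tendsto_add_atTop_nat 1)).mono_left hatTop)
    change _ = ∫ z, f (Ψ z) ∂occupationMeasure Ψ x N - ∫ z, f z ∂occupationMeasure Ψ x N
    rw [integral_occupationMeasure f.continuous.stronglyMeasurable,
      integral_occupationMeasure (f := fun z => f (Ψ z))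
        (f.continuous.comp hΨ).stronglyMeasurable]
    simp only [Function.comp_apply, birkhoffAverage, birkhoffSum, ← Function.iterate_succ_apply,
      Function.iterate_succ_apply']
  · refine le_trans ?_ (ProbabilityMeasure.limsup_measure_closed_le_of_tendsto hlim hC)
    have hν : ∀ N, (ν N : Measure X) C = 1 := occupationMeasure_eq_one hC.measurableSet hx
    simp only [hν, limsup_const, le_refl]

theorem not_existsUnique_invariant_of_forall_iterate_mem {Ψ : X → X} (hΨ : Continuous Ψ)
    {C : Set X} (hC : IsClosed C) {x b : X} (hx : ∀ t, Ψ^[t] x ∈ C) (hb : Ψ b = b) (hbC : b ∉ C) :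
    ¬ ∃! μ : Measure X, IsProbabilityMeasure μ ∧
      ∀ A : Set X, MeasurableSet A → μ (Ψ ⁻¹' A) = μ A := by
  intro unique
  obtain ⟨μ, hμ, hμΨ, hμC⟩ := exists_measurePreserving_of_forall_iterate_mem hΨ hC hx
  have dirac_invariant : ∀ A : Set X, MeasurableSet A →
      Measure.dirac b (Ψ ⁻¹' A) = Measure.dirac b A := fun A hA => by
    rw [← Measure.map_apply hΨ.measurable hA, Measure.map_dirac' hΨ.measurable, hb]
  have : μ = Measure.dirac b := unique.unique
    ⟨hμ, fun A hA => hμΨ.measure_preimage hA.nullMeasurableSet⟩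
    ⟨inferInstance, dirac_invariant⟩
  simp [this, Measure.dirac_apply' _ hC.measurableSet, hbC] at hμC

end InvariantMeasures

section TopologicalDynamics

theorem exists_forall_iterate_mem_of_finite_time {X : Type*} [TopologicalSpace X] [CompactSpace X]
    {Ψ : X → X} (hΨ : Continuous Ψ) {C : Set X} (hC : IsClosed C)
    (h : ∀ N, ∃ x, ∀ t < N, Ψ^[t] x ∈ C) : ∃ x, ∀ t, Ψ^[t] x ∈ C := by
  have hclosed : ∀ t, IsClosed (Ψ^[t] ⁻¹' C) := fun t => hC.preimage (hΨ.iterate t)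
  suffices (⋂ t, Ψ^[t] ⁻¹' C).Nonempty from this.imp fun _ => Set.mem_iInter.1
  refine CompactSpace.iInter_nonempty hclosed fun s => ?_
  obtain ⟨x, hx⟩ := h (s.sup id + 1)
  exact ⟨x, Set.mem_iInter₂.2 fun t ht => hx t (Nat.lt_succ_of_le (Finset.le_sup (f := id) ht))⟩

theorem continuous_of_dependsOn_finite {ι κ α β : Type*} [TopologicalSpace α] [DiscreteTopology α]
    [TopologicalSpace β] {Φ : (ι → α) → κ → β}
    (h : ∀ k, ∃ s : Finset ι, DependsOn (fun x => Φ x k) s) : Continuous Φ := by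
  refine continuous_pi fun k => ?_
  obtain ⟨s, hs⟩ := h k
  refine IsLocallyConstant.continuous ((IsLocallyConstant.iff_exists_open _).2 fun x => ?_)
  refine ⟨{y | ∀ i ∈ s, y i = x i}, ?_, fun _ _ => rfl, fun y hy => hs hy⟩
  have : {y : ι → α | ∀ i ∈ s, y i = x i} = (s : Set ι).pi fun i => {x i} := by
    ext y; simp [Set.mem_pi]
  rw [this]
  exact isOpen_set_pi s.finite_toSet fun _ _ => isOpen_discrete _

theorem isClosed_setOf_apply_ne {ι α : Type*} [TopologicalSpace α] [DiscreteTopology α] (i : ι)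
    (a : α) : IsClosed {x : ι → α | x i ≠ a} :=
  (isClosed_discrete {b | b ≠ a}).preimage (f := fun x : ι → α => x i) (continuous_apply i)

end TopologicalDynamics

section Besicovitch

theorem besicovitchDist_le_of_card_le {α : Type} [DecidableEq α] {x y : ℤ → α} {a b : ℝ}
    (h : ∀ n : ℕ, (((Finset.Icc (-(n : ℤ)) n).filter fun i => x i ≠ y i).card : ℝ) ≤
      a * (2 * n + 1) + b) : besicovitchDist x y ≤ a := by
  have tendsto_bound :
      Tendsto (fun n : ℕ => a + b / (2 * (n : ℝ) + 1)) atTop (nhds a) := by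
    have hden : Tendsto (fun n : ℕ => 2 * (n : ℝ) + 1) atTop atTop :=
      tendsto_atTop_add_const_right _ _
        (tendsto_natCast_atTop_atTop.const_mul_atTop zero_lt_two)
    simpa using (tendsto_const_nhds (x := b)).div_atTop hden |>.const_add a
  rw [besicovitchDist, ← tendsto_bound.limsup_eq]
  refine limsup_le_limsup (Eventually.of_forall fun n => ?_)
    (isCoboundedUnder_le_of_le atTop (x := 0) fun n => by positivity)
    tendsto_bound.isBoundedUnder_le
  have hpos : (0 : ℝ) < 2 * n + 1 := by positivity
  calc _ ≤ (a * (2 * n + 1) + b) / (2 * (n : ℝ) + 1) := div_le_div_of_nonneg_right (h n) hpos.le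
    _ = a + b / (2 * (n : ℝ) + 1) := by field_simp

end Besicovitch

section Automaton

/-- The two particles of a box: the wall stays on the left end of its box, the sweeper travels to
the neighbouring box and back. -/
inductive Kind
  | wall
  | sweeper
  deriving DecidableEq, Inhabited

instance : Fintype Kind := ⟨{.wall, .sweeper}, by rintro ⟨⟩ <;> decide⟩

/-- The kind of the box partner. -/
def Kind.other : Kind → Kind
  | wall => sweeper
  | sweeper => wall

/-- The clock value at which a particle of the given kind learns chunk `0`, the header, of the
simulated role: the wall reads it in its cargo, the sweeper reads it from the wall. -/
def Kind.headerTime : Kind → Fin 28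
  | wall => 0
  | sweeper => 3

/-- Where a particle reads its input: in a chunk of its own cargo or in a neighbouring cell. -/
inductive Source
  | own (chunk : Fin 3)
  | left
  | right
  deriving DecidableEq, Fintype

/-- The chunk read from the own cargo, or `0` if the source is a neighbouring cell. -/
def Source.ownChunk : Source → Fin 3
  | own j => j
  | _ => 0

/-- The publicly visible identity of a particle; `lastDir` is the direction in which the particle
travelled at the end of its previous round. -/
structure Tag where
  kind : Kind
  clk : Fin 28
  lastDir : SignType
  deriving DecidableEq, Fintype

/-- The unit of data exchanged between particles. A packet holding the header of a simulated role
lists its source, its tag, its direction, and the sender part of its action on the cargo. -/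
structure Packet where
  src : Source
  tag : Option Tag
  dir : SignType
  act : Option (Option Tag)
  deriving DecidableEq, Fintype

instance : Inhabited Packet := ⟨⟨.own 0, none, 0, none⟩⟩

/-- What a particle reads in one time step; there is no sender if it reads its own cargo or an
empty cell. -/
structure Signal where
  sender : Option Tag
  packet : Packet
  deriving DecidableEq, Fintype

instance : Inhabited Signal := ⟨⟨none, default⟩⟩

/-- `ι.IsFrom K c`: the signal `ι` was sent by a particle of kind `K` with clock value `c`. -/
def Signal.IsFrom (ι : Signal) (K : Kind) (c : Fin 28) : Prop :=
  ∃ d, ι.sender = some ⟨K, c, d⟩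

instance (ι : Signal) (K : Kind) (c : Fin 28) : Decidable (ι.IsFrom K c) :=
  inferInstanceAs (Decidable (∃ d, ι.sender = some ⟨K, c, d⟩))

/-- The signal of a simulated particle, put together from the signals `ι₁` and `ι₂` received from
a particle of kind `K` at clock values `c` and `c + 1`. -/
def Signal.assemble (ι₁ ι₂ : Signal) (K : Kind) (c : Fin 28) : Signal :=
  if ι₁.IsFrom K c ∧ ι₂.IsFrom K (c + 1) then ⟨ι₁.packet.tag, ι₂.packet⟩ else default

/-- The state of a particle without its cargo; `log c` is the signal read at clock value `c` of
the current round of 28 steps. -/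
structure Role where
  kind : Kind
  clk : Fin 28
  lastDir : SignType
  log : Fin 28 → Signal
  deriving DecidableEq, Fintype

/-- A particle is a role together with its cargo, a role of the simulated particle: the wall
carries the first component of the simulated particle, the sweeper the second one. -/
structure Particle where
  role : Role
  cargo : Role
  deriving DecidableEq, Fintype

namespace Role

variable (r : Role)

/-- The role of a particle at the beginning of a round. -/
def fresh (K : Kind) (d : SignType) : Role := ⟨K, 0, d, default⟩

/-- The identity that the particle shows to its neighbours. -/
def tag : Tag := ⟨r.kind, r.clk, r.lastDir⟩

/-- Chunk `0` of the simulated role, as logged by the particle; meaningful only after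
`Kind.headerTime`. -/
def header : Packet := (r.log r.kind.headerTime).packet

/-- The direction of motion. -/
def dir : SignType :=
  if 24 ≤ r.clk then r.header.dir
  else match r.kind, r.clk with
    | .sweeper, 8 | .sweeper, 9 => 1
    | .sweeper, 20 | .sweeper, 21 => -1
    | _, _ => 0

/-- Where the particle reads its input at its current clock value; `own 0` is the default. -/
def src : Source :=
  match r.kind, r.clk with
  | .wall, 1 => .own 1
  | .wall, 2 => .own 2
  | .wall, 7 | .wall, 22 | .wall, 23 => .right
  | .wall, 10 | .wall, 11 => .left
  | .sweeper, 3 | .sweeper, 4 | .sweeper, 5 => .left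
  | .sweeper, 6 => .own r.header.src.ownChunk
  | .sweeper, 10 | .sweeper, 11 => .right
  | _, _ => .own 0

/-- The signal of a neighbouring simulated particle, see `Signal.assemble`. -/
def assemble (K : Kind) (c : Fin 28) : Signal :=
  .assemble (r.log c) (r.log (c + 1)) K c

/-- The packet shown to the neighbouring cells. -/
def display : Packet :=
  match r.kind, r.clk with
  | .wall, 3 | .wall, 10 => (r.log 0).packet
  | .wall, 4 | .wall, 11 => (r.log 1).packet
  | .wall, 5 => (r.log 2).packet
  | .sweeper, 7 => (r.log 6).packet
  | .sweeper, 10 => (r.log 3).packet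
  | .sweeper, 11 => (r.log 4).packet
  | .sweeper, 22 => { (default : Packet) with tag := (r.assemble .wall 10).sender }
  | .sweeper, 23 => (r.assemble .wall 10).packet
  | _, _ => default

/-- What the neighbouring cells read when they look at the particle. -/
def signal : Signal := ⟨some r.tag, r.display⟩

/-- The signal read by the simulated particle, as the wall knows it at the end of the round. -/
def simulatedInput : Signal :=
  match r.header.src with
  | .own _ => ⟨none, (r.log 7).packet⟩
  | .left => r.assemble .sweeper 10
  | .right => r.assemble .sweeper 22

/-- The input handed to the cargo, if any. -/
def action : Option Signal :=
  if r.clk = 27 then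
    match r.kind with
    | .wall => some r.simulatedInput
    | .sweeper => r.header.act.map fun sender => ⟨sender, (r.log 5).packet⟩
  else none

/-- The three packets in which a wall or sweeper reads everything that it needs to know about the
simulated role `r`. -/
def chunk (j : Fin 3) : Packet :=
  match j with
  | 0 => ⟨r.src, some r.tag, r.dir, r.action.map Signal.sender⟩
  | 1 => r.display
  | 2 => (r.action.map Signal.packet).getD default

/-- A sweeper reading the chunks of the wall, or a wall reading the answer of the sweeper, dies if
it does not find its partner. -/
def Dies (ι : Signal) : Prop :=
  ((r.kind = .sweeper ∧ (r.clk = 3 ∨ r.clk = 4 ∨ r.clk = 5)) ∨ (r.kind = .wall ∧ r.clk = 7)) ∧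
    ι.sender ≠ some ⟨r.kind.other, r.clk, r.lastDir⟩

instance (ι : Signal) : Decidable (r.Dies ι) := inferInstanceAs (Decidable (_ ∧ _))

/-- The role in the middle of a round after reading `ι`. -/
def record (ι : Signal) : Role :=
  { r with clk := r.clk + 1, log := Function.update r.log r.clk ι }

/-- The role after reading `ι`, or `none` if the particle dies. -/
def step (ι : Signal) : Option Role :=
  if r.Dies ι then none
  else if r.clk = 27 then some (fresh r.kind r.header.dir)
  else some (r.record ι)

theorem step_eq_some {r r' : Role} {ι : Signal} (h : r.step ι = some r') :
    ¬ r.Dies ι ∧ (r.clk = 27 ∧ r' = fresh r.kind r.header.dir ∨ r.clk ≠ 27 ∧ r' = r.record ι) := by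
  unfold step at h
  split_ifs at h with h1 h2 <;> simp_all

end Role

/-- `none` is the empty cell. -/
abbrev Config := ℤ → Option Particle

namespace Particle

/-- The particle after reading `ι`: its cargo makes a step whenever the role says so, and it takes
the particle along if it dies. -/
def step (q : Particle) (ι : Signal) : Option Particle :=
  match q.role.step ι, q.role.action with
  | none, _ => none
  | some r, none => some ⟨r, q.cargo⟩
  | some r, some κ => (q.cargo.step κ).map (mk r)

theorem step_eq_some_iff {q q' : Particle} {ι : Signal} :
    q.step ι = some q' ↔ q.role.step ι = some q'.role ∧
      q.role.action.elim (some q.cargo) q.cargo.step = some q'.cargo := by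
  obtain ⟨r', μ'⟩ := q'
  rw [step]
  rcases q.role.step ι with _ | r <;> rcases q.role.action with _ | κ <;>
    simp [and_comm]

end Particle

namespace Config

variable (x : Config)

/-- The signal shown by cell `i`; an empty cell shows the default signal, without sender. -/
def signalAt (i : ℤ) : Signal := (x i).elim default fun q => q.role.signal

/-- The signal read by a particle `q` in cell `i`. -/
def input (i : ℤ) (q : Particle) : Signal :=
  match q.role.src with
  | .own j => ⟨none, q.cargo.chunk j⟩
  | .left => x.signalAt (i - 1)
  | .right => x.signalAt (i + 1)

/-- The particle that leaves cell `i` in direction `d`, if any. -/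
def emitted (i : ℤ) (d : SignType) : Option Particle :=
  (x i).bind fun q => if q.role.dir = d then q.step (x.input i q) else none

/-- All particles arriving in the same cell annihilate. -/
def collide {α : Type*} : Option α → Option α → Option α → Option α
  | some a, none, none => some a
  | none, some a, none => some a
  | none, none, some a => some a
  | _, _, _ => none

/-- The global rule of the cellular automaton. -/
def next : Config := fun i =>
  collide (x.emitted i 0) (x.emitted (i - 1) 1) (x.emitted (i + 1) (-1))

end Config

end Automaton

section Rounds

/-- The clock value after `j` steps of a round. -/
def tick (j : ℕ) : Fin 28 := Fin.ofNat 28 j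

theorem val_tick {j : ℕ} (hj : j < 28) : (tick j : ℕ) = j := Nat.mod_eq_of_lt hj

theorem tick_val (c : Fin 28) : tick c = c := Fin.ofNat_val_eq_self c

theorem tick_succ (j : ℕ) : tick (j + 1) = tick j + 1 := by
  simp [tick, Fin.ext_iff, Fin.val_add]

/-- The role after `j ≤ 27` steps of a round in which the signals `I 0, I 1, …` were read. -/
def row (K : Kind) (d : SignType) (I : ℕ → Signal) (j : ℕ) : Role :=
  ⟨K, tick j, d, fun c => if (c : ℕ) < j then I c else default⟩

variable {K : Kind} {d : SignType} {I I' : ℕ → Signal} {j : ℕ}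

theorem row_zero : row K d I 0 = .fresh K d := by
  simp [row, Role.fresh, tick, Pi.default_def]

theorem row_congr (h : ∀ i < j, I i = I' i) : row K d I j = row K d I' j := by
  simp only [row, Role.mk.injEq, true_and]
  funext c
  split_ifs with hc
  exacts [h c hc, rfl]

theorem record_row (hj : j < 28) : (row K d I j).record (I j) = row K d I (j + 1) := by
  simp only [Role.record, row, Role.mk.injEq, tick_succ, true_and]
  funext c
  rcases eq_or_ne c (tick j) with rfl | hc
  · simp [val_tick hj]
  · have : (c : ℕ) ≠ j := fun h => hc (by rw [← h, tick_val])
    simp only [Function.update_of_ne hc, Nat.lt_succ_iff_lt_or_eq, this, or_false]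

theorem header_row (hj : K.headerTime < j) : (row K d I j).header = (I K.headerTime).packet := by
  simp [Role.header, row, hj]

/-- The position of a particle, relative to the left end of its box, after `j` steps of a round
in which it neither dies nor moves in the last four steps. -/
def sweep : Kind → ℕ → ℤ
  | .wall, _ => 0
  | .sweeper, j => if j ≤ 8 then 1 else if j = 9 then 2 else if j ≤ 20 then 3
    else if j = 21 then 2 else 1

/-- The position of a particle, relative to the initial left end of its box, after `j ≤ 28` steps
of a round in which it reads `I 0, I 1, …`. In the last four steps the box travels in the direction
given by the header. -/
def column (K : Kind) (I : ℕ → Signal) (j : ℕ) : ℤ :=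
  sweep K j + (I K.headerTime).packet.dir * ((j - 24 : ℕ) : ℤ)

theorem column_of_le (hj : j ≤ 24) : column K I j = sweep K j := by
  simp [column, Nat.sub_eq_zero_of_le hj]

theorem column_twentyEight :
    column K I 28 = sweep K 0 + 4 * ((I K.headerTime).packet.dir : ℤ) := by
  cases K <;> simp [column, sweep] <;> ring

theorem headerTime_lt (K : Kind) (hj : 4 ≤ j) : K.headerTime < j := by
  cases K <;> simp only [Kind.headerTime] <;> omega

theorem column_congr (h : ∀ i < j, I i = I' i) : column K I j = column K I' j := by
  rcases le_or_gt j 24 with hj | hj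
  · rw [column_of_le hj, column_of_le hj]
  · rw [column, column, h _ (headerTime_lt K (by omega))]

theorem dir_row (hj : j < 28) : ((row K d I j).dir : ℤ) = column K I (j + 1) - column K I j := by
  rcases le_or_gt 24 j with h24 | h24
  · obtain ⟨k, rfl⟩ := Nat.exists_eq_add_of_le h24
    have hclk : (24 : Fin 28) ≤ (row K d I (24 + k)).clk := h24.trans_eq (val_tick hj).symm
    have hsweep : sweep K (24 + k + 1) = sweep K (24 + k) := by
      cases K <;> simp only [sweep]
      split_ifs <;> omega
    rw [Role.dir, if_pos hclk, header_row (headerTime_lt K (by omega)), column, column, hsweep,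
      show 24 + k + 1 - 24 = k + 1 by omega, Nat.add_sub_cancel_left]
    push_cast
    ring
  · rw [column_of_le (by omega), column_of_le (by omega)]
    interval_cases j <;> cases K <;> rfl

theorem action_row (hj : j < 27) : (row K d I j).action = none := by
  have : tick j ≠ 27 := fun h => by
    have := congrArg Fin.val h
    rw [val_tick (by omega)] at this
    omega
  simp [Role.action, row, this]

end Rounds

section Histories

/-- Assigns to every position and time the particles that are found there. -/
abbrev Spacetime := ℤ → ℤ → Particle → Prop

/-- A particle at position `p` and time `t` sends the signal `ι`, unless `ι` has no sender. -/
def Heard (H : Spacetime) (p t : ℤ) (ι : Signal) : Prop :=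
  ι.sender ≠ none → ∃ q, H p t q ∧ q.role.signal = ι

/-- A particle `q` at position `p` and time `t` may read `ι`, if neighbours have distance `n`. -/
def Reads (H : Spacetime) (n p t : ℤ) (q : Particle) (ι : Signal) : Prop :=
  match q.role.src with
  | .own j => ι = ⟨none, q.cargo.chunk j⟩
  | .left => Heard H (p - n) t ι
  | .right => Heard H (p + n) t ι

/-- The particles `H` obey the local rule from time `T₀` on, with cells of width `n` and time steps
of length `m`. Positions and times of different particles need not be congruent modulo `n` and `m`,
hence the exclusion principle is in terms of distances. It is required only of the particles in
`C`, those that survive the next step. -/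
structure History (n m T₀ : ℤ) (H C : Spacetime) : Prop where
  width_pos : 0 < n
  duration_pos : 0 < m
  core_le : ∀ {p t q}, C p t q → H p t q
  unique : ∀ {p t q q'}, H p t q → H p t q' → q = q'
  exists_pred : ∀ {p t q}, H p t q → T₀ ≤ t → ∃ q₀ ι p₀, p = p₀ + q₀.role.dir * n ∧
    C p₀ (t - m) q₀ ∧ Reads H n p₀ (t - m) q₀ ι ∧ q₀.step ι = some q
  exclusion : ∀ {p t q p' t' q'}, C p t q → C p' t' q' → |p - p'| < n → 2 * |t - t'| ≤ m →
    p = p' ∧ t = t'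

/-- A particle of kind `K` with cargo `μ` that starts a round at time `t₀` in the box with left end
`p₀`, reads `I 0, I 1, …` and is still present after `j` steps. -/
structure Worldline (n m : ℤ) (H C : Spacetime) (K : Kind) (d : SignType) (I : ℕ → Signal)
    (μ : Role) (p₀ t₀ : ℤ) (j : ℕ) : Prop where
  core : ∀ i < j, C (p₀ + column K I i * n) (t₀ + i * m) ⟨row K d I i, μ⟩
  reads : ∀ i < j, Reads H n (p₀ + column K I i * n) (t₀ + i * m) ⟨row K d I i, μ⟩ (I i)
  survives : ∀ i < j, ¬ (row K d I i).Dies (I i)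
  mem : ∀ i ≤ j, H (p₀ + column K I i * n) (t₀ + i * m) ⟨row K d I i, μ⟩

/-- The particle simulated by a box of width `4 * n`: the roles of its wall and its sweeper at the
beginning of a round, provided that they moved there together. -/
def Simulated (n : ℤ) (H : Spacetime) : Spacetime := fun p t q =>
  ∃ d, H p t ⟨.fresh .wall d, q.role⟩ ∧ H (p + n) t ⟨.fresh .sweeper d, q.cargo⟩

/-- The simulated particles whose wall and sweeper complete their round. -/
def SimulatedCore (n m : ℤ) (H C : Spacetime) : Spacetime := fun p t q =>
  Simulated n H p t q ∧ ∀ s ≤ 24, ∀ K, ∃ r, C (p + sweep K s * n) (t + s * m) r ∧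
    r.role.kind = K ∧ r.role.clk = tick s

/-- A box around the simulated particle `q`, the wall and the sweeper of which complete a round
that starts at time `t₀`. -/
structure Round (n m : ℤ) (H C : Spacetime) (d : SignType) (I J : ℕ → Signal) (q : Particle)
    (p₀ t₀ : ℤ) : Prop where
  wall : Worldline n m H C .wall d I q.role p₀ t₀ 27
  sweeper : Worldline n m H C .sweeper d J q.cargo p₀ t₀ 27
  sweeper_chunk : ∀ k : Fin 3, (J (3 + k)).packet = q.role.chunk k
  answer : (I 7).packet = (J 6).packet

variable {n m T₀ : ℤ} {H C : Spacetime} {K : Kind} {d : SignType} {I J : ℕ → Signal} {μ : Role}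
  {p₀ t₀ : ℤ} {j : ℕ}

namespace History

theorem exists_pred_of_clk_ne_zero (hH : History n m T₀ H C) {p t : ℤ} {r : Role}
    (h : H p t ⟨r, μ⟩) (ht : T₀ ≤ t) (hr : r.clk ≠ 0) :
    ∃ r₀ ι p₀, p = p₀ + r₀.dir * n ∧ C p₀ (t - m) ⟨r₀, μ⟩ ∧ Reads H n p₀ (t - m) ⟨r₀, μ⟩ ι ∧
      ¬ r₀.Dies ι ∧ r₀.clk ≠ 27 ∧ r = r₀.record ι := by
  obtain ⟨⟨r₀, μ₀⟩, ι, p₀, hp, hC, hreads, hstep⟩ := hH.exists_pred h ht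
  obtain ⟨hrole, hcargo⟩ := Particle.step_eq_some_iff.1 hstep
  obtain ⟨hdies, ⟨-, hfresh⟩ | ⟨hclk, hrecord⟩⟩ := Role.step_eq_some hrole
  · exact absurd (congrArg Role.clk hfresh) hr
  · have hμ : μ₀ = μ := by simpa [Role.action, hclk] using hcargo
    subst hμ
    exact ⟨r₀, ι, p₀, hp, hC, hreads, hdies, hclk, hrecord⟩

theorem exists_pred_of_clk_eq_zero (hH : History n m T₀ H C) {p t : ℤ} {r : Role}
    (h : H p t ⟨r, μ⟩) (ht : T₀ ≤ t) (hr : r.clk = 0) :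
    ∃ r₀ ν p₀, p = p₀ + r₀.dir * n ∧ C p₀ (t - m) ⟨r₀, ν⟩ ∧ r₀.clk = 27 ∧
      r = .fresh r₀.kind r₀.header.dir ∧ r₀.action.elim (some ν) ν.step = some μ := by
  obtain ⟨⟨r₀, ν⟩, ι, p₀, hp, hC, -, hstep⟩ := hH.exists_pred h ht
  obtain ⟨hrole, hcargo⟩ := Particle.step_eq_some_iff.1 hstep
  obtain ⟨-, ⟨hclk, hfresh⟩ | ⟨hclk, hrecord⟩⟩ := Role.step_eq_some hrole
  · exact ⟨r₀, ν, p₀, hp, hC, hclk, hfresh, hcargo⟩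
  · have : r₀.clk + 1 = 0 := (congrArg Role.clk hrecord).symm.trans hr
    exact absurd (by rw [← add_right_cancel_iff (a := 1), this]; rfl) hclk

end History

namespace Worldline

theorem zero (h : H (p₀ + sweep K 0 * n) t₀ ⟨.fresh K d, μ⟩) :
    Worldline n m H C K d I μ p₀ t₀ 0 := by
  refine ⟨by simp, by simp, by simp, fun i hi => ?_⟩
  obtain rfl := Nat.le_zero.1 hi
  simpa [column_of_le, row_zero] using h

theorem extend (w : Worldline n m H C K d I μ p₀ t₀ j) (hj : j < 28) {ι : Signal}
    (hcore : C (p₀ + column K I j * n) (t₀ + j * m) ⟨row K d I j, μ⟩)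
    (hreads : Reads H n (p₀ + column K I j * n) (t₀ + j * m) ⟨row K d I j, μ⟩ ι)
    (hdies : ¬ (row K d I j).Dies ι)
    (hmem : H (p₀ + column K I j * n + (row K d I j).dir * n) (t₀ + (j + 1 : ℕ) * m)
      ⟨(row K d I j).record ι, μ⟩) :
    Worldline n m H C K d (Function.update I j ι) μ p₀ t₀ (j + 1) := by
  set I' := Function.update I j ι with hI'
  have agree : ∀ i < j, I i = I' i := fun i hi => (Function.update_of_ne hi.ne _ _).symm
  have hrow : ∀ i ≤ j, row K d I i = row K d I' i := fun i hi =>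
    row_congr fun k hk => agree k (hk.trans_le hi)
  have hcolumn : ∀ i ≤ j, column K I i = column K I' i := fun i hi =>
    column_congr fun k hk => agree k (hk.trans_le hi)
  have hι : I' j = ι := Function.update_self ..
  rw [hcolumn j le_rfl, hrow j le_rfl] at hcore hreads hmem
  rw [hrow j le_rfl] at hdies
  refine ⟨fun i hi => ?_, fun i hi => ?_, fun i hi => ?_, fun i hi => ?_⟩
  · rcases Nat.lt_succ_iff_lt_or_eq.1 hi with hi | rfl
    · rw [← hrow i hi.le, ← hcolumn i hi.le]; exact w.core i hi
    · exact hcore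
  · rcases Nat.lt_succ_iff_lt_or_eq.1 hi with hi | rfl
    · rw [← hrow i hi.le, ← hcolumn i hi.le, ← agree i hi]; exact w.reads i hi
    · rwa [hι]
  · rcases Nat.lt_succ_iff_lt_or_eq.1 hi with hi | rfl
    · rw [← hrow i hi.le, ← agree i hi]; exact w.survives i hi
    · rwa [hι]
  · rcases Nat.lt_succ_iff_lt_or_eq.1 (Nat.lt_succ_of_le hi) with hi | rfl
    · have hi := Nat.le_of_lt_succ hi
      rw [← hrow i hi, ← hcolumn i hi]; exact w.mem i hi
    · rwa [← hι, record_row hj, add_assoc, ← add_mul, dir_row hj, add_sub_cancel] at hmem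

theorem start (w : Worldline n m H C K d I μ p₀ t₀ j) :
    H (p₀ + sweep K 0 * n) t₀ ⟨.fresh K d, μ⟩ := by
  simpa [column_of_le, row_zero] using w.mem 0 (Nat.zero_le j)

theorem mem_of_le (w : Worldline n m H C K d I μ p₀ t₀ j) {i : ℕ} (hi : i ≤ j) (hi' : i ≤ 24) :
    H (p₀ + sweep K i * n) (t₀ + i * m) ⟨row K d I i, μ⟩ := by
  simpa only [column_of_le hi'] using w.mem i hi

theorem heard_left (w : Worldline n m H C K d I μ p₀ t₀ j) {i : ℕ} (hi : i < j) (hi' : i ≤ 24)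
    (hsrc : (row K d I i).src = .left) :
    Heard H (p₀ + (sweep K i - 1) * n) (t₀ + i * m) (I i) := by
  have := w.reads i hi
  rw [Reads, hsrc, column_of_le hi'] at this
  convert this using 1
  ring

theorem heard_right (w : Worldline n m H C K d I μ p₀ t₀ j) {i : ℕ} (hi : i < j) (hi' : i ≤ 24)
    (hsrc : (row K d I i).src = .right) :
    Heard H (p₀ + (sweep K i + 1) * n) (t₀ + i * m) (I i) := by
  have := w.reads i hi
  rw [Reads, hsrc, column_of_le hi'] at this
  convert this using 1
  ring

theorem wall_chunk (w : Worldline n m H C .wall d I μ p₀ t₀ j) (k : Fin 3) (hk : (k : ℕ) < j) :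
    (I k).packet = μ.chunk k := by
  have hsrc : (row .wall d I k).src = .own k := by fin_cases k <;> rfl
  have := w.reads k hk
  rw [Reads, hsrc] at this
  rw [this]

theorem eq_signal_of_heard (hH : History n m T₀ H C) (w : Worldline n m H C K d I μ p₀ t₀ j)
    {i : ℕ} (hi : i ≤ j) (hi' : i ≤ 24) {ι : Signal}
    (h : Heard H (p₀ + sweep K i * n) (t₀ + i * m) ι) (hι : ι.sender ≠ none) :
    ι = (row K d I i).signal := by
  obtain ⟨q, hq, rfl⟩ := h hι
  rw [hH.unique hq (w.mem_of_le hi hi')]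

end Worldline

namespace History

theorem exists_worldline (hH : History n m T₀ H C) (ht₀ : T₀ ≤ t₀) {p : ℤ} {r : Role}
    (h : H p (t₀ + j * m) ⟨r, μ⟩) (hj : (r.clk : ℕ) = j) :
    ∃ d I p₀, Worldline n m H C r.kind d I μ p₀ t₀ j ∧ p = p₀ + column r.kind I j * n ∧
      r = row r.kind d I j := by
  induction j generalizing p r with
  | zero =>
    obtain ⟨r₀, -, -, -, -, -, rfl, -⟩ :=
      hH.exists_pred_of_clk_eq_zero h (by simpa using ht₀) (Fin.ext hj)
    refine ⟨r₀.header.dir, default, p - sweep r₀.kind 0 * n, .zero ?_, ?_, row_zero.symm⟩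
    · simpa [Role.fresh] using h
    · simp [column_of_le, Role.fresh]
  | succ j ih =>
    have hm := hH.duration_pos
    obtain ⟨r₀, ι, p₁, hp, hcore, hreads, hdies, hclk, rfl⟩ :=
      hH.exists_pred_of_clk_ne_zero h (by push_cast; nlinarith) fun h0 => by simp [h0] at hj
    have ht : t₀ + (j + 1 : ℕ) * m - m = t₀ + j * m := by push_cast; ring
    rw [ht] at hcore hreads
    have hj' : (r₀.clk : ℕ) = j := by
      have : ((r₀.clk + 1 : Fin 28) : ℕ) = j + 1 := hj
      omega
    obtain ⟨d, I, p₀, w, rfl, hr₀⟩ := ih (hH.core_le hcore) hj'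
    have hj28 : j < 28 := hj' ▸ r₀.clk.isLt
    set K := r₀.kind
    rw [hr₀] at hcore hreads hdies hp h
    rw [hp] at h
    have w' := w.extend hj28 hcore hreads hdies h
    have hι : Function.update I j ι j = ι := Function.update_self ..
    have agree : ∀ i < j, I i = Function.update I j ι i := fun i hi =>
      (Function.update_of_ne hi.ne _ _).symm
    refine ⟨d, _, p₀, w', ?_, ?_⟩
    · rw [hp, add_assoc, ← add_mul, row_congr agree, column_congr agree, dir_row hj28,
        add_sub_cancel]
      rfl
    · have hrecord := record_row (K := K) (d := d) (I := Function.update I j ι) hj28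
      rw [hι] at hrecord
      rw [hr₀, row_congr agree, hrecord]
      rfl

end History

theorem Heard.exists_worldline {p : ℤ} {s : ℕ} {ι : Signal} (hι : Heard H p (t₀ + s * m) ι)
    (hH : History n m T₀ H C) (ht₀ : T₀ ≤ t₀) (hs : s ≤ 24)
    (hsender : ι.sender = some ⟨K, tick s, d⟩) :
    ∃ I μ, Worldline n m H C K d I μ (p - sweep K s * n) t₀ s ∧
      ι.packet = (row K d I s).display := by
  obtain ⟨⟨r, μ⟩, hmem, rfl⟩ := hι (by simp [hsender])
  have htag : r.tag = ⟨K, tick s, d⟩ := Option.some.inj hsender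
  have hclk : (r.clk : ℕ) = s := by
    rw [show r.clk = tick s from congrArg Tag.clk htag, val_tick (by omega)]
  obtain ⟨d', I, p₀, w, rfl, hr⟩ := hH.exists_worldline ht₀ hmem hclk
  rw [show r.kind = K from congrArg Tag.kind htag] at w hr ⊢
  obtain rfl : d' = d := (congrArg Role.lastDir hr).symm.trans (congrArg Tag.lastDir htag)
  refine ⟨I, μ, ?_, congrArg Role.display hr⟩
  rwa [column_of_le hs, add_sub_cancel_right]

namespace Worldline

theorem exists_wall (hH : History n m T₀ H C) (w : Worldline n m H C .sweeper d I μ p₀ t₀ j)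
    (hj : 6 ≤ j) (ht₀ : T₀ ≤ t₀) :
    ∃ I' ρ, Worldline n m H C .wall d I' ρ p₀ t₀ 5 ∧
      ∀ k : Fin 3, (I (3 + k)).packet = ρ.chunk k := by
  have sender (k : Fin 3) : (I (3 + k)).sender = some ⟨.wall, tick (3 + k), d⟩ := by
    have hclk : tick (3 + k) = 3 ∨ tick (3 + k) = 4 ∨ tick (3 + k) = 5 := by fin_cases k <;> decide
    have := w.survives (3 + k) (by omega)
    exact not_not.1 fun h => this ⟨.inl ⟨rfl, hclk⟩, h⟩
  have heard (k : Fin 3) : Heard H p₀ (t₀ + (3 + k : ℕ) * m) (I (3 + k)) := by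
    have hsrc : (row .sweeper d I (3 + k)).src = .left := by fin_cases k <;> rfl
    have hsweep : sweep .sweeper (3 + k) = 1 := by fin_cases k <;> rfl
    simpa [hsweep] using w.heard_left (by omega) (by omega) hsrc
  obtain ⟨I', ρ, w', -⟩ := (heard 2).exists_worldline hH ht₀ (by decide) (sender 2)
  replace w' : Worldline n m H C .wall d I' ρ p₀ t₀ 5 := by simpa [sweep] using w'
  refine ⟨I', ρ, w', fun k => ?_⟩
  have hdisplay : (row .wall d I' (3 + k)).display = (I' k).packet := by fin_cases k <;> rfl
  have hsignal : I (3 + k) = (row .wall d I' (3 + k)).signal :=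
    w'.eq_signal_of_heard hH (by omega) (by omega) (by simpa [sweep] using heard k)
      (by simp [sender k])
  rw [hsignal, ← w'.wall_chunk k (by omega), ← hdisplay]
  rfl

theorem exists_sweeper (hH : History n m T₀ H C) (w : Worldline n m H C .wall d I μ p₀ t₀ j)
    (hj : 8 ≤ j) (ht₀ : T₀ ≤ t₀) :
    ∃ J ν, Worldline n m H C .sweeper d J ν p₀ t₀ 7 ∧ (I 7).packet = (J 6).packet := by
  have sender : (I 7).sender = some ⟨.sweeper, tick 7, d⟩ :=
    not_not.1 fun h => w.survives 7 (by omega) ⟨.inr ⟨rfl, rfl⟩, h⟩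
  have heard := w.heard_right (i := 7) (by omega) (by omega) rfl
  obtain ⟨J, ν, w', hJ⟩ := heard.exists_worldline hH ht₀ (by omega) sender
  exact ⟨J, ν, by simpa [sweep] using w', hJ⟩

theorem simulated_of_sweeper (hH : History n m T₀ H C)
    (w : Worldline n m H C .sweeper d I μ p₀ t₀ j) (hj : 6 ≤ j) (ht₀ : T₀ ≤ t₀) :
    ∃ ρ, Simulated n H p₀ t₀ ⟨ρ, μ⟩ ∧ ∀ k : Fin 3, (I (3 + k)).packet = ρ.chunk k := by
  obtain ⟨I', ρ, w', hρ⟩ := w.exists_wall hH hj ht₀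
  exact ⟨ρ, ⟨d, by simpa [sweep] using w'.start, by simpa [sweep] using w.start⟩, hρ⟩

theorem simulated_of_wall (hH : History n m T₀ H C) (w : Worldline n m H C .wall d I μ p₀ t₀ j)
    (hj : 8 ≤ j) (ht₀ : T₀ ≤ t₀) : ∃ ν, Simulated n H p₀ t₀ ⟨μ, ν⟩ := by
  obtain ⟨J, ν, w', -⟩ := w.exists_sweeper hH hj ht₀
  exact ⟨ν, d, by simpa [sweep] using w.start, by simpa [sweep] using w'.start⟩

theorem exists_simulated (hH : History n m T₀ H C)
    (w : Worldline n m H C K d I μ p₀ t₀ j) (hj : 8 ≤ j) (ht₀ : T₀ ≤ t₀) :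
    ∃ q, Simulated n H p₀ t₀ q ∧ (row K d I 10).display = q.role.chunk 0 ∧
      (row K d I 11).display = q.role.chunk 1 := by
  cases K with
  | wall =>
    obtain ⟨ν, hν⟩ := w.simulated_of_wall hH hj ht₀
    exact ⟨_, hν, w.wall_chunk 0 (by omega), w.wall_chunk 1 (by simp; omega)⟩
  | sweeper =>
    obtain ⟨ρ, hρ, hchunk⟩ := w.simulated_of_sweeper hH (by omega) ht₀
    exact ⟨_, hρ, hchunk 0, hchunk 1⟩

end Worldline

theorem heard_default {p t : ℤ} : Heard H p t default := fun h => absurd rfl h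

/-- A box shows the signal of its simulated particle at clock values `10` and `11`: the wall to the
right, the sweeper, which is visiting the box on the right, to the wall of that box. -/
theorem Heard.assemble {p : ℤ} {ι₁ ι₂ : Signal} (h₁ : Heard H p (t₀ + 10 * m) ι₁)
    (h₂ : Heard H p (t₀ + 11 * m) ι₂) (hH : History n m T₀ H C) (ht₀ : T₀ ≤ t₀) (K : Kind) :
    Heard (Simulated n H) (p - sweep K 10 * n) t₀ (.assemble ι₁ ι₂ K 10) := by
  rw [Signal.assemble]
  split_ifs with hfrom
  swap
  · exact heard_default
  obtain ⟨⟨d₁, hd₁⟩, ⟨d₂, hd₂⟩⟩ := hfrom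
  obtain ⟨I, μ, w, hI⟩ := h₂.exists_worldline (s := 11) hH ht₀ (by decide) hd₂
  have hsweep : sweep K 11 = sweep K 10 := by cases K <;> rfl
  rw [hsweep] at w
  have hι₁ : ι₁ = (row K d₂ I 10).signal :=
    w.eq_signal_of_heard hH (by decide) (by decide) (by simpa using h₁) (by simp [hd₁])
  obtain ⟨q, hq, h0, h1⟩ := w.exists_simulated hH (by decide) ht₀
  refine fun _ => ⟨q, hq, ?_⟩
  rw [hI, h1, hι₁]
  change _ = Signal.mk (row K d₂ I 10).display.tag _
  rw [h0]
  rfl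

namespace Round

variable {q : Particle}

theorem simulated (h : Round n m H C d I J q p₀ t₀) : Simulated n H p₀ t₀ q :=
  ⟨d, by simpa [sweep] using h.wall.start, by simpa [sweep] using h.sweeper.start⟩

theorem simulatedCore (h : Round n m H C d I J q p₀ t₀) : SimulatedCore n m H C p₀ t₀ q := by
  refine ⟨h.simulated, fun s hs K => ?_⟩
  cases K with
  | wall => exact ⟨_, by simpa only [column_of_le hs] using h.wall.core s (by omega), rfl, rfl⟩
  | sweeper =>
    exact ⟨_, by simpa only [column_of_le hs] using h.sweeper.core s (by omega), rfl, rfl⟩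

theorem header_wall (h : Round n m H C d I J q p₀ t₀) :
    (row .wall d I 27).header = q.role.chunk 0 :=
  h.wall.wall_chunk 0 (by decide)

theorem action_sweeper (h : Round n m H C d I J q p₀ t₀) :
    (row .sweeper d J 27).action = q.role.action := by
  have h0 : (J 3).packet = q.role.chunk 0 := h.sweeper_chunk 0
  have h2 : (J 5).packet = q.role.chunk 2 := h.sweeper_chunk 2
  have : (row .sweeper d J 27).action = (J 3).packet.act.map fun sender => ⟨sender, (J 5).packet⟩ :=
    rfl
  rw [this, h0, h2]
  rcases haction : q.role.action with _ | κ <;> simp [Role.chunk, haction]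

theorem simulatedInput_own (h : Round n m H C d I J q p₀ t₀) {k : Fin 3}
    (hsrc : q.role.src = .own k) :
    (row .wall d I 27).simulatedInput = ⟨none, q.cargo.chunk k⟩ := by
  have hJ : (J 3).packet.src = .own k := by
    rw [show (J 3).packet = q.role.chunk 0 from h.sweeper_chunk 0, ← hsrc]
    rfl
  have hrow : (row .sweeper d J 6).src = .own k := by
    change Source.own (J 3).packet.src.ownChunk = _
    rw [hJ, Source.ownChunk]
  have hread := h.sweeper.reads 6 (by decide)
  rw [Reads, hrow] at hread
  rw [Role.simulatedInput, h.header_wall, show (q.role.chunk 0).src = .own k from hsrc]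
  change Signal.mk none (I 7).packet = _
  rw [h.answer, hread]

theorem heard_simulatedInput_left (h : Round n m H C d I J q p₀ t₀) (hH : History n m T₀ H C)
    (ht₀ : T₀ ≤ t₀) (hsrc : q.role.src = .left) :
    Heard (Simulated n H) (p₀ - 4 * n) t₀ (row .wall d I 27).simulatedInput := by
  rw [Role.simulatedInput, h.header_wall, show (q.role.chunk 0).src = .left from hsrc]
  have h₁ := h.wall.heard_left (i := 10) (by decide) (by decide) rfl
  have h₂ := h.wall.heard_left (i := 11) (by decide) (by decide) rfl
  have hp : p₀ - 4 * n = p₀ + (sweep .wall 10 - 1) * n - sweep .sweeper 10 * n := by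
    simp [sweep]; ring
  rw [hp]
  exact Heard.assemble h₁ h₂ hH ht₀ .sweeper

/-- The signal of the simulated right neighbour is collected by the sweeper, which hands it to the
wall at clock values `22` and `23`. -/
theorem heard_simulatedInput_right (h : Round n m H C d I J q p₀ t₀) (hH : History n m T₀ H C)
    (ht₀ : T₀ ≤ t₀) (hsrc : q.role.src = .right) :
    Heard (Simulated n H) (p₀ + 4 * n) t₀ (row .wall d I 27).simulatedInput := by
  rw [Role.simulatedInput, h.header_wall, show (q.role.chunk 0).src = .right from hsrc]
  change Heard _ _ _ (.assemble (I 22) (I 23) .sweeper 22)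
  rw [Signal.assemble]
  split_ifs with hfrom
  swap
  · exact heard_default
  obtain ⟨⟨d₁, hd₁⟩, ⟨d₂, hd₂⟩⟩ := hfrom
  have hI₁ : I 22 = (row .sweeper d J 22).signal :=
    h.sweeper.eq_signal_of_heard hH (by decide) (by decide)
      (h.wall.heard_right (by decide) (by decide) rfl) (by simp [hd₁])
  have hI₂ : I 23 = (row .sweeper d J 23).signal :=
    h.sweeper.eq_signal_of_heard hH (by decide) (by decide)
      (h.wall.heard_right (by decide) (by decide) rfl) (by simp [hd₂])
  rw [hI₁, hI₂]
  change Heard _ _ _ (.assemble (J 10) (J 11) .wall 10)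
  have h₁ := h.sweeper.heard_right (i := 10) (by decide) (by decide) rfl
  have h₂ := h.sweeper.heard_right (i := 11) (by decide) (by decide) rfl
  have hp : p₀ + 4 * n = p₀ + (sweep .sweeper 10 + 1) * n - sweep .wall 10 * n := by
    simp [sweep]
  rw [hp]
  exact Heard.assemble h₁ h₂ hH ht₀ .wall

theorem reads_simulatedInput (h : Round n m H C d I J q p₀ t₀) (hH : History n m T₀ H C)
    (ht₀ : T₀ ≤ t₀) : Reads (Simulated n H) (4 * n) p₀ t₀ q (row .wall d I 27).simulatedInput := by
  rw [Reads]
  split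
  next hsrc => exact h.simulatedInput_own hsrc
  next hsrc => exact h.heard_simulatedInput_left hH ht₀ hsrc
  next hsrc => exact h.heard_simulatedInput_right hH ht₀ hsrc

end Round

namespace History

theorem exists_previous_worldline (hH : History n m T₀ H C) (ht₀ : T₀ ≤ t₀) {p : ℤ}
    (h : H p (t₀ + 28 * m) ⟨.fresh K d, μ⟩) :
    ∃ d' I ν, Worldline n m H C K d' I ν (p - (sweep K 0 + 4 * d) * n) t₀ 27 ∧
      (row K d' I 27).header.dir = d ∧ (row K d' I 27).action.elim (some ν) ν.step = some μ := by
  have hm := hH.duration_pos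
  obtain ⟨r₀, ν, p₁, hp, hcore, hclk, hr, hcargo⟩ :=
    hH.exists_pred_of_clk_eq_zero h (by nlinarith) rfl
  have ht : t₀ + 28 * m - m = t₀ + (27 : ℕ) * m := by push_cast; ring
  rw [ht] at hcore
  obtain ⟨d', I, p₀, w, rfl, hr₀⟩ :=
    hH.exists_worldline ht₀ (hH.core_le hcore) (congrArg Fin.val hclk)
  have hK : K = r₀.kind := congrArg Role.kind hr
  have hd : d = r₀.header.dir := congrArg Role.lastDir hr
  rw [← hK] at w hr₀ hp
  rw [hr₀] at hp hd hcargo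
  refine ⟨d', I, ν, ?_, hd.symm, hcargo⟩
  have hcolumn : column K I 27 + (row K d' I 27).dir = sweep K 0 + 4 * d := by
    rw [dir_row (by decide), add_sub_cancel, column_twentyEight, hd,
      header_row (headerTime_lt K (by decide))]
  convert w using 1
  rw [hp, ← hcolumn]
  ring

theorem exists_round (hH : History n m T₀ H C) (ht₀ : T₀ ≤ t₀) {p : ℤ} {q : Particle}
    (h : Simulated n H p (t₀ + 28 * m) q) :
    ∃ d I J q₀ p₀, p = p₀ + q₀.role.dir * (4 * n) ∧ Round n m H C d I J q₀ p₀ t₀ ∧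
      q₀.step (row .wall d I 27).simulatedInput = some q := by
  obtain ⟨d, hwall, hsweeper⟩ := h
  obtain ⟨d₁, I, ρ, w₁, hd, hρ⟩ := hH.exists_previous_worldline ht₀ hwall
  obtain ⟨d₂, J, μ, w₂, -, hμ⟩ := hH.exists_previous_worldline ht₀ hsweeper
  have hp₁ : p - (sweep .wall 0 + 4 * d) * n = p - 4 * d * n := by simp only [sweep]; ring
  have hp₂ : p + n - (sweep .sweeper 0 + 4 * d) * n = p - 4 * d * n := by simp [sweep]; ring
  rw [hp₁] at w₁
  rw [hp₂] at w₂
  obtain ⟨I', ρ', w₁', hchunk⟩ := w₂.exists_wall hH (by decide) ht₀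
  obtain ⟨J', μ', w₂', hanswer⟩ := w₁.exists_sweeper hH (by decide) ht₀
  have hstart := hH.unique w₁.start w₁'.start
  obtain rfl : ρ = ρ' := congrArg Particle.cargo hstart
  obtain rfl : d₁ = d₂ := congrArg (fun q => q.role.lastDir) hstart
  have hJ : J 6 = J' 6 :=
    congrArg (fun q => q.role.log 6)
      (hH.unique (w₂.mem_of_le (i := 7) (by decide) (by decide))
        (w₂'.mem_of_le (i := 7) (by decide) (by decide)))
  have round : Round n m H C d₁ I J ⟨ρ, μ⟩ (p - 4 * d * n) t₀ := ⟨w₁, w₂, hchunk, hJ ▸ hanswer⟩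
  rw [round.action_sweeper] at hμ
  refine ⟨d₁, I, J, ⟨ρ, μ⟩, _, ?_, round, Particle.step_eq_some_iff.2 ⟨hρ, hμ⟩⟩
  rw [← hd, round.header_wall]
  simp only [Role.chunk]
  ring

theorem simulated_unique (hH : History n m T₀ H C) {p t : ℤ} {q q' : Particle}
    (h : Simulated n H p t q) (h' : Simulated n H p t q') : q = q' := by
  obtain ⟨d, hwall, hsweeper⟩ := h
  obtain ⟨d', hwall', hsweeper'⟩ := h'
  rcases q with ⟨ρ, μ⟩
  rcases q' with ⟨ρ', μ'⟩
  obtain rfl : ρ = ρ' := congrArg Particle.cargo (hH.unique hwall hwall')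
  obtain rfl : μ = μ' := congrArg Particle.cargo (hH.unique hsweeper hsweeper')
  rfl

end History

/-- Both early and late in a round, each of the four cells of a box contains the wall of the box or
its sweeper. -/
theorem exists_sweep_eq {a : ℤ} (ha : 0 ≤ a) (ha' : a < 4) :
    ∃ K, (∃ s ≤ 10, sweep K s = a) ∧ (∃ s, 14 ≤ s ∧ s ≤ 24 ∧ sweep K s = a) ∧
      (K = .wall → a = 0) := by
  interval_cases a
  · exact ⟨.wall, ⟨0, by decide⟩, ⟨14, by decide⟩, fun _ => rfl⟩
  · exact ⟨.sweeper, ⟨8, by decide⟩, ⟨22, by decide⟩, nofun⟩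
  · exact ⟨.sweeper, ⟨9, by decide⟩, ⟨21, by decide⟩, nofun⟩
  · exact ⟨.sweeper, ⟨10, by decide⟩, ⟨20, by decide⟩, nofun⟩

theorem exists_abs_sub_mul_le (hm : 0 < m) (τ : ℤ) :
    ∃ k : ℤ, 2 * |τ - k * m| ≤ m ∧ ∀ l : ℤ, |τ| ≤ l * m → |k| ≤ l := by
  have hdiv := Int.emod_add_mul_ediv (2 * τ + m) (2 * m)
  have hnonneg := Int.emod_nonneg (2 * τ + m) (by omega : 2 * m ≠ 0)
  have hlt := Int.emod_lt_of_pos (2 * τ + m) (by omega : 0 < 2 * m)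
  set k := (2 * τ + m) / (2 * m)
  refine ⟨k, ?_, fun l hl => ?_⟩
  · rw [← abs_two, ← abs_mul, abs_le]
    constructor <;> nlinarith
  · rw [abs_le] at hl ⊢
    constructor <;> by_contra! h <;> nlinarith

namespace History

variable {p p' t t' : ℤ} {q q' : Particle}

theorem simulatedCore_eq_of_near (hH : History n m T₀ H C) (h : SimulatedCore n m H C p t q)
    (h' : SimulatedCore n m H C p' t' q') {s s' : ℕ} (hs : s ≤ 24) (hs' : s' ≤ 24)
    (hp : |p + sweep K s * n - p'| < n) (ht : 2 * |t - t' - ((s' : ℤ) - s) * m| ≤ m) :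
    K = .wall ∧ p + sweep K s * n = p' ∧ t = t' := by
  obtain ⟨r, hr, hkind, hclk⟩ := h.2 s hs K
  obtain ⟨r', hr', hkind', hclk'⟩ := h'.2 s' hs' .wall
  have hp' : p' + sweep .wall s' * n = p' := by simp [sweep]
  rw [hp'] at hr'
  obtain ⟨hpos, htime⟩ := hH.exclusion hr hr' hp
    (by convert ht using 3; ring)
  rw [hpos, htime] at hr
  obtain rfl := hH.unique (hH.core_le hr) (hH.core_le hr')
  have hss' : s = s' := by
    rw [← val_tick (by omega : s < 28), ← val_tick (by omega : s' < 28), ← hclk, hclk']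
  subst hss'
  exact ⟨hkind.symm.trans hkind', hpos, by linarith⟩

theorem simulatedCore_eq_of_le (hH : History n m T₀ H C) (h : SimulatedCore n m H C p t q)
    (h' : SimulatedCore n m H C p' t' q') (hp : p ≤ p') (hp' : p' - p < 4 * n)
    (ht : 2 * |t - t'| ≤ 28 * m) : p = p' ∧ t = t' := by
  have hn := hH.width_pos
  obtain ⟨k, hk, hk14⟩ := exists_abs_sub_mul_le hH.duration_pos (t - t')
  specialize hk14 14 (by linarith)
  rw [abs_le] at hk14
  set a := (p' - p) / n
  have ha : 0 ≤ a := Int.ediv_nonneg (by omega) hn.le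
  have ha4 : a < 4 := Int.ediv_lt_of_lt_mul hn hp'
  have hmod : |p + a * n - p'| < n := by
    have := Int.emod_add_ediv_mul (p' - p) n
    rw [show p + a * n - p' = -((p' - p) % n) by linarith, abs_neg,
      abs_of_nonneg (Int.emod_nonneg _ hn.ne')]
    exact Int.emod_lt_of_pos _ hn
  obtain ⟨K, ⟨s₁, hs₁, hsweep₁⟩, ⟨s₂, hs₂, hs₂', hsweep₂⟩, hwall⟩ := exists_sweep_eq ha ha4
  obtain ⟨s, hs, hsweep, hks, hks'⟩ :
      ∃ s : ℕ, s ≤ 24 ∧ sweep K s = a ∧ 0 ≤ s + k ∧ s + k ≤ 24 := by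
    rcases le_total 0 k with hk0 | hk0
    · exact ⟨s₁, by omega, hsweep₁, by omega, by omega⟩
    · exact ⟨s₂, hs₂', hsweep₂, by omega, by omega⟩
  obtain ⟨hK, hpos, htime⟩ := hH.simulatedCore_eq_of_near (K := K) (s' := (s + k).toNat) h h' hs
    (by omega) (by rwa [hsweep]) (by rwa [Int.toNat_of_nonneg hks, add_sub_cancel_left])
  rw [hsweep, hwall hK] at hpos
  exact ⟨by linarith, htime⟩

theorem history_simulated (hH : History n m T₀ H C) :
    History (4 * n) (28 * m) (T₀ + 28 * m) (Simulated n H) (SimulatedCore n m H C) where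
  width_pos := by linarith [hH.width_pos]
  duration_pos := by linarith [hH.duration_pos]
  core_le h := h.1
  unique := hH.simulated_unique
  exists_pred {p t q} h ht := by
    obtain ⟨d, I, J, q₀, p₀, hp, round, hstep⟩ :=
      hH.exists_round (t₀ := t - 28 * m) (by linarith) (by rwa [sub_add_cancel])
    exact ⟨q₀, _, p₀, hp, round.simulatedCore, round.reads_simulatedInput hH (by linarith), hstep⟩
  exclusion {p t q p' t' q'} h h' hp ht := by
    rw [abs_lt] at hp
    rcases le_total p p' with hle | hle
    · exact hH.simulatedCore_eq_of_le h h' hle (by linarith) ht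
    · obtain ⟨hpos, htime⟩ :=
        hH.simulatedCore_eq_of_le h' h hle (by linarith) (by rwa [abs_sub_comm])
      exact ⟨hpos.symm, htime.symm⟩

end History

end Histories

section Counting

variable {n m T₀ : ℤ} {H C : Spacetime} {K : Kind} {k k' : ℕ} {p p' p₁ p₂ t : ℤ}

/-- A particle that is at position `p` at time `t` is at position `p'` after `k` steps. -/
def Moves (n m : ℤ) (H : Spacetime) (p t : ℤ) : ℕ → ℤ → Prop
  | 0, p' => p' = p
  | k + 1, p' => ∃ p₁ q, Moves n m H p t k p₁ ∧ H p₁ (t + k * m) q ∧ p' = p₁ + q.role.dir * n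

namespace Moves

theorem unique (hH : History n m T₀ H C) (h₁ : Moves n m H p t k p₁)
    (h₂ : Moves n m H p t k p₂) : p₁ = p₂ := by
  induction k generalizing p₁ p₂ with
  | zero => exact h₁.trans h₂.symm
  | succ k ih =>
    obtain ⟨p₁, q₁, h₁, hq₁, rfl⟩ := h₁
    obtain ⟨p₂, q₂, h₂, hq₂, rfl⟩ := h₂
    obtain rfl := ih h₁ h₂
    rw [hH.unique hq₁ hq₂]

theorem abs_sub_le (hn : 0 < n) (h : Moves n m H p t k p') : |p' - p| ≤ k * n := by
  induction k generalizing p' with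
  | zero => simp [show p' = p from h]
  | succ k ih =>
    obtain ⟨p₁, q, h, -, rfl⟩ := h
    have hdir : |(q.role.dir : ℤ) * n| ≤ n := by
      rw [abs_mul, abs_of_pos hn]
      exact mul_le_of_le_one_left hn.le (by cases q.role.dir <;> simp)
    calc |p₁ + q.role.dir * n - p| = |p₁ - p + q.role.dir * n| := by ring_nf
      _ ≤ |p₁ - p| + |q.role.dir * n| := abs_add_le _ _
      _ ≤ k * n + n := add_le_add (ih h) hdir
      _ = (k + 1 : ℕ) * n := by push_cast; ring

theorem trans (h₁ : Moves n m H p t k p₁) (h₂ : Moves n m H p₁ (t + k * m) k' p₂) :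
    Moves n m H p t (k + k') p₂ := by
  induction k' generalizing p₂ with
  | zero => rwa [show p₂ = p₁ from h₂]
  | succ k' ih =>
    obtain ⟨p₃, q, h₂, hq, rfl⟩ := h₂
    refine ⟨p₃, q, ih h₂, ?_, rfl⟩
    rwa [Nat.add_eq, Nat.cast_add, add_mul, ← add_assoc]

end Moves

theorem Worldline.moves {d : SignType} {I : ℕ → Signal} {μ : Role} {p₀ t₀ : ℤ} {j : ℕ}
    (w : Worldline n m H C K d I μ p₀ t₀ j) {i : ℕ} (hi : i ≤ j + 1) (hi' : i ≤ 28) :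
    Moves n m H (p₀ + sweep K 0 * n) t₀ i (p₀ + column K I i * n) := by
  induction i with
  | zero => rw [column_of_le (by decide)]; exact rfl
  | succ i ih =>
    refine ⟨_, _, ih (by omega) (by omega), w.mem i (by omega), ?_⟩
    rw [dir_row (by omega)]
    ring

/-- The particle at `z` comes from the wall or the sweeper, according to `K`, of what the
simulated particle at `z'` became in its first step. -/
def Descends (n m : ℤ) (H C : Spacetime) (K : Kind) (z' z : ℤ × ℤ) : Prop :=
  ∃ (k : ℕ) (q : Particle), 28 ≤ k ∧ k ≤ 55 ∧ z.2 = z'.2 + 28 * m + k * m ∧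
    SimulatedCore n m H C z'.1 z'.2 q ∧
    Moves n m H (z'.1 + q.role.dir * (4 * n) + sweep K 0 * n) (z'.2 + 28 * m) k z.1

/-- The round in which a particle is observed need not be completed, so its box need not be in the
core. But the box of the previous round has completed its own previous round. -/
theorem History.exists_descends (hH : History n m T₀ H C) {z : ℤ × ℤ} {q : Particle}
    (h : H z.1 z.2 q) (ht : T₀ + 83 * m ≤ z.2) : ∃ z' K, Descends n m H C K z' z := by
  obtain ⟨p, t⟩ := z
  obtain ⟨s, hs⟩ : ∃ s : ℕ, (q.role.clk : ℕ) = s := ⟨_, rfl⟩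
  have hs28 : s < 28 := hs ▸ q.role.clk.isLt
  have hsm : (s : ℤ) * m ≤ 27 * m := mul_le_mul_of_nonneg_right (by omega) hH.duration_pos.le
  have hm := hH.duration_pos
  set t₀ := t - s * m - 56 * m with ht₀
  have hT₀ : T₀ ≤ t₀ := by linarith
  have ht : t = t₀ + 28 * m + 28 * m + s * m := by linarith
  clear_value t₀
  subst ht
  obtain ⟨d, I, p₀, w, rfl, -⟩ := hH.exists_worldline (by linarith) h hs
  obtain ⟨d', I', ν, w', hd, -⟩ :=
    hH.exists_previous_worldline (t₀ := t₀ + 28 * m) (by linarith) w.start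
  set K := q.role.kind
  obtain ⟨q₁, hq₁, -⟩ := w'.exists_simulated hH (by decide) (by linarith)
  obtain ⟨d₂, I₂, J₂, q₂, p₂, hp₂, round, -⟩ := hH.exists_round hT₀ hq₁
  refine ⟨(p₂, t₀), K, 28 + s, q₂, by omega, by omega, by push_cast; ring,
    round.simulatedCore, ?_⟩
  rw [← hp₂]
  have hmoves' := w'.moves (i := 28) (by decide) le_rfl
  rw [column_twentyEight, ← header_row (d := d') (headerTime_lt K (by decide : 4 ≤ 27)), hd,
    sub_add_cancel] at hmoves'
  exact hmoves'.trans (w.moves s.le_succ hs28.le)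

namespace Descends

variable {z z' z₁ z₂ : ℤ × ℤ}

theorem unique (hH : History n m T₀ H C) (h₁ : Descends n m H C K z' z₁)
    (h₂ : Descends n m H C K z' z₂) (ht : |z₁.2 - z₂.2| < m) : z₁ = z₂ := by
  obtain ⟨k₁, q₁, -, -, ht₁, hq₁, hmoves₁⟩ := h₁
  obtain ⟨k₂, q₂, -, -, ht₂, hq₂, hmoves₂⟩ := h₂
  obtain rfl := hH.simulated_unique hq₁.1 hq₂.1
  have hk : |(k₁ : ℤ) - k₂| < 1 := by
    rw [ht₁, ht₂, add_sub_add_left_eq_sub, ← sub_mul, abs_mul, abs_of_pos hH.duration_pos] at ht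
    exact lt_of_mul_lt_mul_right (by rwa [one_mul]) hH.duration_pos.le
  obtain rfl : k₁ = k₂ := by rw [abs_lt] at hk; omega
  exact Prod.ext (hmoves₁.unique hH hmoves₂) (ht₁.trans ht₂.symm)

theorem abs_sub_le (hn : 0 < n) (h : Descends n m H C K z' z) : |z.1 - z'.1| ≤ 60 * n := by
  obtain ⟨k, q, -, hk, -, -, hmoves⟩ := h
  have hle := (hmoves.abs_sub_le hn).trans
    (mul_le_mul_of_nonneg_right (by exact_mod_cast hk : (k : ℤ) ≤ 55) hn.le)
  have hsweep : sweep K 0 * n = 0 ∨ sweep K 0 * n = n := by cases K <;> simp [sweep]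
  have hdir : (q.role.dir : ℤ) = -1 ∨ (q.role.dir : ℤ) = 0 ∨ (q.role.dir : ℤ) = 1 := by
    cases q.role.dir <;> simp
  rw [abs_le] at hle ⊢
  rcases hdir with hdir | hdir | hdir <;> rw [hdir] at hle <;> constructor <;> omega

end Descends

theorem abs_sub_lt_of_ediv_eq_ediv {n a b : ℤ} (hn : 0 < n) (h : a / n = b / n) :
    |a - b| < n := by
  have hmod : a - b = a % n - b % n := by rw [Int.emod_def, Int.emod_def, h]; ring
  rw [hmod, abs_lt]
  constructor <;> linarith [Int.emod_nonneg a hn.ne', Int.emod_nonneg b hn.ne',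
    Int.emod_lt_of_pos a hn, Int.emod_lt_of_pos b hn]

/-- The positions and times in `[a, a + L] × [b, b + m)` at which there is a particle. -/
def events (C : Spacetime) (a L b m : ℤ) : Set (ℤ × ℤ) :=
  {z | (∃ q, C z.1 z.2 q) ∧ a ≤ z.1 ∧ z.1 ≤ a + L ∧ b ≤ z.2 ∧ z.2 < b + m}

namespace History

variable {F : Finset (ℤ × ℤ)} {a L b : ℤ}

theorem card_le_of_subset_events (hH : History n m T₀ H C) (hL : 0 ≤ L)
    (hF : (F : Set (ℤ × ℤ)) ⊆ events C a L b m) : n * F.card ≤ 2 * (L + n) := by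
  have hn := hH.width_pos
  let cell (z : ℤ × ℤ) : ℤ × Bool := ((z.1 - a) / n, decide (2 * (z.2 - b) < m))
  have hcell : Set.InjOn cell F := by
    intro z hz z' hz' h
    obtain ⟨⟨q, hq⟩, -, -, ht, ht'⟩ := hF hz
    obtain ⟨⟨q', hq'⟩, -, -, hs, hs'⟩ := hF hz'
    obtain ⟨hpos, htime⟩ := Prod.mk.injEq .. ▸ h
    have hdist : |z.1 - z'.1| < n := by
      simpa using abs_sub_lt_of_ediv_eq_ediv hn hpos
    have hhalf : 2 * (z.2 - b) < m ↔ 2 * (z'.2 - b) < m := by simpa using htime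
    have hclose : 2 * |z.2 - z'.2| ≤ m := by
      rcases abs_cases (z.2 - z'.2) with ⟨h, -⟩ | ⟨h, -⟩ <;> omega
    exact Prod.ext_iff.2 (hH.exclusion hq hq' hdist hclose)
  have hmaps : Set.MapsTo cell F (Finset.Icc 0 (L / n) ×ˢ Finset.univ : Finset (ℤ × Bool)) := by
    intro z hz
    obtain ⟨-, hp, hp', -⟩ := hF hz
    rw [Finset.mem_coe, Finset.mem_product, Finset.mem_Icc]
    exact ⟨⟨Int.ediv_nonneg (by omega) hn.le, Int.ediv_le_ediv hn (by omega)⟩, Finset.mem_univ _⟩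
  have hcard := Finset.card_le_card_of_injOn cell hmaps hcell
  rw [Finset.card_product, Int.card_Icc, Finset.card_univ, Fintype.card_bool] at hcard
  have hcard' : (F.card : ℤ) ≤ (L / n + 1) * 2 := by
    have := Int.ediv_nonneg hL hn.le
    omega
  have := Int.mul_ediv_self_le (x := L) hn.ne'
  nlinarith

theorem exists_subset_events_simulatedCore (hH : History n m T₀ H C) (hb : T₀ + 83 * m ≤ b)
    (hF : (F : Set (ℤ × ℤ)) ⊆ events C a L b m) :
    ∃ F' : Finset (ℤ × ℤ), F.card ≤ 2 * F'.card ∧ (F' : Set (ℤ × ℤ)) ⊆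
      events (SimulatedCore n m H C) (a - 60 * n) (L + 120 * n) (b - 83 * m) (28 * m) := by
  have hm := hH.duration_pos
  have hancestor : ∀ z ∈ F, ∃ z' K, Descends n m H C K z' z := by
    intro z hz
    obtain ⟨⟨q, hq⟩, -, -, ht, -⟩ := hF hz
    exact hH.exists_descends (hH.core_le hq) (hb.trans ht)
  choose! f K hf using hancestor
  have hinj : Set.InjOn (fun z => (f z, K z)) F := by
    intro z₁ hz₁ z₂ hz₂ h
    obtain ⟨hfz, hKz⟩ := Prod.mk.injEq .. ▸ h
    obtain ⟨-, -, -, ht₁, ht₁'⟩ := hF hz₁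
    obtain ⟨-, -, -, ht₂, ht₂'⟩ := hF hz₂
    refine (hf z₁ hz₁).unique hH (hfz ▸ hKz ▸ hf z₂ hz₂) ?_
    rw [abs_lt]
    constructor <;> linarith
  refine ⟨F.image f, ?_, ?_⟩
  · calc F.card ≤ (F.image f ×ˢ (Finset.univ : Finset Kind)).card :=
          Finset.card_le_card_of_injOn _ (fun z hz => by
            simpa using ⟨z.1, z.2, hz, rfl⟩) hinj
      _ = 2 * (F.image f).card := by rw [Finset.card_product, mul_comm]; rfl
  · rw [Finset.coe_image, Set.image_subset_iff]
    intro z hz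
    obtain ⟨-, hp, hp', ht, ht'⟩ := hF hz
    have hle := abs_le.1 ((hf z hz).abs_sub_le hH.width_pos)
    obtain ⟨k, q, hk, hk', hzt, hq, -⟩ := hf z hz
    have hkm : 28 * m ≤ k * m := mul_le_mul_of_nonneg_right (by exact_mod_cast hk) hm.le
    have hkm' : k * m ≤ 55 * m := mul_le_mul_of_nonneg_right (by exact_mod_cast hk') hm.le
    exact ⟨⟨q, hq⟩, by linarith, by linarith, by linarith, by linarith⟩

/-- Each level of simulation doubles the number of particles of a box and quadruples its width. -/
theorem exists_pow_mul_card_le (N : ℕ) : ∀ {n m : ℤ} (T₀ : ℤ), 0 < n → 0 < m → ∃ c T₁ : ℤ,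
    ∀ {H C : Spacetime}, History n m T₀ H C → ∀ {F : Finset (ℤ × ℤ)} {a L b : ℤ}, 0 ≤ L → T₁ ≤ b →
      (F : Set (ℤ × ℤ)) ⊆ events C a L b m → 2 ^ N * (n * F.card) ≤ 2 * (L + c) := by
  induction N with
  | zero =>
    intro n m T₀ _ _
    refine ⟨n, 0, fun hH F a L b hL _ hF => ?_⟩
    simpa using hH.card_le_of_subset_events hL hF
  | succ N ih =>
    intro n m T₀ hn hm
    obtain ⟨c, T₁, hc⟩ := ih (T₀ + 28 * m) (by linarith : 0 < 4 * n) (by linarith : 0 < 28 * m)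
    refine ⟨c + 120 * n, max (T₀ + 83 * m) (T₁ + 83 * m), fun hH F a L b hL hb hF => ?_⟩
    obtain ⟨hb₀, hb₁⟩ := max_le_iff.1 hb
    obtain ⟨F', hcard, hF'⟩ := hH.exists_subset_events_simulatedCore hb₀ hF
    have hcard' : (F.card : ℤ) ≤ 2 * F'.card := by exact_mod_cast hcard
    calc 2 ^ (N + 1) * (n * F.card) ≤ 2 ^ (N + 1) * (n * (2 * F'.card)) := by gcongr
      _ = 2 ^ N * (4 * n * F'.card) := by ring
      _ ≤ 2 * (L + 120 * n + c) := hc hH.history_simulated (by linarith) (by linarith) hF'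
      _ = 2 * (L + (c + 120 * n)) := by ring

end History

end Counting

section Orbit

namespace Config

variable {x : Config} {i : ℤ} {d : SignType} {q : Particle}

theorem exists_of_emitted_eq_some (h : x.emitted i d = some q) :
    ∃ q₀, x i = some q₀ ∧ q₀.role.dir = d ∧ q₀.step (x.input i q₀) = some q := by
  obtain ⟨q₀, hq₀, h⟩ := Option.bind_eq_some_iff.1 h
  split_ifs at h with hd
  exact ⟨q₀, hq₀, hd, h⟩

theorem exists_of_next_eq_some (h : x.next i = some q) :
    ∃ p₀ q₀, i = p₀ + q₀.role.dir ∧ x p₀ = some q₀ ∧ q₀.step (x.input p₀ q₀) = some q := by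
  have hcollide : ∀ a b c : Option Particle, collide a b c = some q →
      a = some q ∨ b = some q ∨ c = some q := by
    rintro (_ | _) (_ | _) (_ | _) <;> simp [collide]
  rcases hcollide _ _ _ h with h | h | h <;>
    obtain ⟨q₀, hq₀, hd, hstep⟩ := exists_of_emitted_eq_some h <;>
    exact ⟨_, q₀, by simp [hd], hq₀, hstep⟩

/-- The history of the particles in the configurations `x`, `x.next`, `x.next.next`, … -/
def orbit (x : Config) : Spacetime := fun p t q => ∃ k : ℕ, t = k ∧ next^[k] x p = some q

theorem heard_orbit (x : Config) (i : ℤ) (k : ℕ) : Heard x.orbit i k ((next^[k] x).signalAt i) := by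
  intro h
  rcases hq : next^[k] x i with _ | q
  · simp [signalAt, hq, default] at h
  · exact ⟨q, ⟨k, rfl, hq⟩, by simp [signalAt, hq]⟩

theorem reads_orbit (x : Config) (i : ℤ) (k : ℕ) (q : Particle) :
    Reads x.orbit 1 i k q ((next^[k] x).input i q) := by
  rw [Reads, input]
  cases q.role.src with
  | own j => rfl
  | left => exact x.heard_orbit _ k
  | right => exact x.heard_orbit _ k

theorem history_orbit (x : Config) : History 1 1 1 x.orbit x.orbit where
  width_pos := one_pos
  duration_pos := one_pos
  core_le h := h
  unique := by
    rintro p t q q' ⟨k, rfl, h⟩ ⟨k', hk, h'⟩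
    obtain rfl := Nat.cast_injective hk
    exact Option.some.inj (h.symm.trans h')
  exists_pred := by
    rintro p t q ⟨_ | k, rfl, h⟩ ht
    · norm_num at ht
    · rw [Function.iterate_succ_apply'] at h
      obtain ⟨p₀, q₀, rfl, hq₀, hstep⟩ := exists_of_next_eq_some h
      have hk : ((k + 1 : ℕ) : ℤ) - 1 = k := by push_cast; ring
      rw [hk]
      exact ⟨q₀, _, p₀, by rw [mul_one], ⟨k, rfl, hq₀⟩, x.reads_orbit p₀ k q₀, hstep⟩
  exclusion := by
    intro p t q p' t' q' _ _ hp ht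
    have ht' : |t - t'| < 1 := by omega
    exact ⟨sub_eq_zero.1 (Int.abs_lt_one_iff.1 hp), sub_eq_zero.1 (Int.abs_lt_one_iff.1 ht')⟩

theorem exists_pow_mul_card_ne_none_le (N : ℕ) : ∃ (c : ℤ) (t : ℕ), ∀ (x : Config) (n : ℕ),
    2 ^ N * (((Finset.Icc (-(n : ℤ)) n).filter fun i => next^[t] x i ≠ none).card : ℤ) ≤
      2 * (2 * n + c) := by
  obtain ⟨c, T₁, hc⟩ := History.exists_pow_mul_card_le N (n := 1) (m := 1) 1 one_pos one_pos
  refine ⟨c, T₁.toNat, fun x n => ?_⟩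
  set F := (Finset.Icc (-(n : ℤ)) n).filter fun i => next^[T₁.toNat] x i ≠ none
  have hF : ((F ×ˢ {(T₁.toNat : ℤ)} : Finset (ℤ × ℤ)) : Set (ℤ × ℤ)) ⊆
      events x.orbit (-n) (2 * n) T₁.toNat 1 := by
    rintro ⟨p, t⟩ hp
    simp only [Finset.mem_coe, Finset.mem_product, Finset.mem_singleton, F, Finset.mem_filter,
      Finset.mem_Icc] at hp
    obtain ⟨⟨⟨hp, hp'⟩, hne⟩, rfl⟩ := hp
    obtain ⟨q, hq⟩ := Option.ne_none_iff_exists'.1 hne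
    exact ⟨⟨q, _, rfl, hq⟩, hp, by dsimp only; omega, le_rfl, lt_add_one _⟩
  simpa using hc x.history_orbit (by positivity) (Int.self_le_toNat T₁) hF

end Config

end Orbit

section Simulation

/-- The part of a simulated particle that a particle of the given kind carries as its cargo. -/
def Particle.component (q : Particle) : Kind → Role
  | .wall => q.role
  | .sweeper => q.cargo

namespace Config

/-- No particle dies in the next step, and no two particles collide, since they keep their
order. -/
structure Safe (x : Config) : Prop where
  exists_step : ∀ {p q}, x p = some q → ∃ q', q.step (x.input p q) = some q'
  strictMono : ∀ {p p' q q'}, x p = some q → x p' = some q' → p < p' →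
    p + (q.role.dir : ℤ) < p' + q'.role.dir

variable {x y z : Config} {p i i' : ℤ} {q q' : Particle} {K K' : Kind} {s : ℕ}

theorem Safe.injective (hx : x.Safe) {p' : ℤ} (h : x p = some q) (h' : x p' = some q')
    (heq : p + (q.role.dir : ℤ) = p' + q'.role.dir) : p = p' := by
  rcases lt_trichotomy p p' with hlt | heq' | hlt
  · exact absurd heq (hx.strictMono h h' hlt).ne
  · exact heq'
  · exact absurd heq (hx.strictMono h' h hlt).ne'

theorem Safe.next_eq (hx : x.Safe) (h : x p = some q) (hq : q.step (x.input p q) = some q') :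
    x.next (p + q.role.dir) = some q' := by
  have hself : x.emitted p q.role.dir = some q' := by simp [emitted, h, hq]
  have hother : ∀ {i : ℤ} {d : SignType}, i + d = p + q.role.dir → i ≠ p →
      x.emitted i d = none := by
    intro i d heq hne
    by_contra hsome
    obtain ⟨v, hv⟩ := Option.ne_none_iff_exists'.1 hsome
    obtain ⟨q₀, hq₀, rfl, -⟩ := exists_of_emitted_eq_some hv
    exact hne (hx.injective hq₀ h heq)
  rw [next]
  rcases hd : q.role.dir with _ | _ | _ <;>
    simp only [hd, SignType.zero_eq_zero, SignType.neg_eq_neg_one, SignType.pos_eq_one,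
      SignType.coe_zero, SignType.coe_neg_one, SignType.coe_one, add_zero] at hself hother ⊢
  · rw [hself, hother (by simp) (by omega), hother (by simp) (by omega), collide]
  · rw [neg_add_cancel_right, hself, hother (by simp) (by omega), hother (by simp) (by omega),
      collide]
  · rw [add_sub_cancel_right, hself, hother (by simp) (by omega), hother (by simp) (by omega),
      collide]

/-- What a particle of kind `K` with clock value `c` in the box of the simulated cell `i` shows
when it displays chunk `j` of the simulated role. The directions `P` are those in which the boxes
have travelled in the previous round. -/
def shown (y : Config) (P : ℤ → SignType) (K : Kind) (c : Fin 28) (j : Fin 3) (i : ℤ) : Signal :=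
  (y i).elim default fun q => ⟨some ⟨K, c, P i⟩, q.role.chunk j⟩

/-- The signals read in the course of a round by the two particles in the box of the simulated
cell `i`, which holds the particle `q`. -/
def script (y : Config) (P : ℤ → SignType) (i : ℤ) (q : Particle) : Kind → ℕ → Signal
  | .wall, 1 => ⟨none, q.role.chunk 1⟩
  | .wall, 2 => ⟨none, q.role.chunk 2⟩
  | .wall, 7 => ⟨some ⟨.sweeper, 7, P i⟩, q.cargo.chunk q.role.src.ownChunk⟩
  | .wall, 10 => shown y P .sweeper 10 0 (i - 1)
  | .wall, 11 => shown y P .sweeper 11 1 (i - 1)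
  | .wall, 22 =>
    ⟨some ⟨.sweeper, 22, P i⟩, { (default : Packet) with tag := (y.signalAt (i + 1)).sender }⟩
  | .wall, 23 => ⟨some ⟨.sweeper, 23, P i⟩, (y.signalAt (i + 1)).packet⟩
  | .sweeper, 3 => ⟨some ⟨.wall, 3, P i⟩, q.role.chunk 0⟩
  | .sweeper, 4 => ⟨some ⟨.wall, 4, P i⟩, q.role.chunk 1⟩
  | .sweeper, 5 => ⟨some ⟨.wall, 5, P i⟩, q.role.chunk 2⟩
  | .sweeper, 6 => ⟨none, q.cargo.chunk q.role.src.ownChunk⟩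
  | .sweeper, 10 => shown y P .wall 10 0 (i + 1)
  | .sweeper, 11 => shown y P .wall 11 1 (i + 1)
  | K, _ => ⟨none, (q.component K).chunk 0⟩

/-- The cell of a particle after `s` steps of a round that follows the script. -/
def position (y : Config) (P : ℤ → SignType) (i : ℤ) (q : Particle) (K : Kind) (s : ℕ) : ℤ :=
  4 * i + column K (script y P i q K) s

/-- A particle after `s ≤ 27` steps of a round that follows the script. -/
def simulator (y : Config) (P : ℤ → SignType) (i : ℤ) (q : Particle) (K : Kind) (s : ℕ) :
    Particle :=
  ⟨row K (P i) (script y P i q K) s, q.component K⟩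

variable {P : ℤ → SignType}

theorem assemble_shown (y : Config) (P : ℤ → SignType) (K : Kind) (c : Fin 28) (i : ℤ) :
    Signal.assemble (shown y P K c 0 i) (shown y P K (c + 1) 1 i) K c = y.signalAt i := by
  rcases h : y i with _ | q <;>
    simp [Signal.assemble, Signal.IsFrom, shown, signalAt, h, Role.chunk, Role.signal, default]

theorem packet_script_headerTime :
    (script y P i q K K.headerTime).packet = q.role.chunk 0 := by
  cases K <;> rfl

theorem header_simulator (hs : 4 ≤ s) : (simulator y P i q K s).role.header = q.role.chunk 0 := by
  rw [simulator, header_row (headerTime_lt K hs), packet_script_headerTime]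

theorem position_eq (y : Config) (P : ℤ → SignType) (i : ℤ) (q : Particle) (K : Kind) (s : ℕ) :
    position y P i q K s = 4 * i + sweep K s + q.role.dir * ((s - 24 : ℕ) : ℤ) := by
  rw [position, column, packet_script_headerTime, Role.chunk, add_assoc]

theorem position_of_le (hs : s ≤ 24) : position y P i q K s = 4 * i + sweep K s := by
  rw [position, column_of_le hs]

theorem position_add_dir (hs : s < 28) :
    position y P i q K s + (simulator y P i q K s).role.dir = position y P i q K (s + 1) := by
  rw [simulator, dir_row hs, position, position]
  ring

theorem position_twentyEight (y' : Config) (P' : ℤ → SignType) (q' : Particle) :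
    position y P i q K 28 = position y' P' (i + q.role.dir) q' K 0 := by
  rw [position_of_le (Nat.zero_le _), position, column_twentyEight, packet_script_headerTime,
    Role.chunk]
  ring

theorem sweep_mem_Icc (K : Kind) (s : ℕ) : sweep K s ∈ Set.Icc 0 3 := by
  cases K <;> simp only [sweep, Set.mem_Icc]
  · simp
  · split_ifs <;> simp

theorem sweep_wall_lt_sweep_sweeper (s : ℕ) : sweep .wall s < sweep .sweeper s := by
  simp only [sweep]
  split_ifs <;> simp

theorem sweep_eq_sweep_zero (K : Kind) (hs : 22 ≤ s) : sweep K s = sweep K 0 := by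
  cases K <;> simp only [sweep]
  split_ifs <;> omega

theorem position_lt_position_of_lt (hy : y.Safe) (h : y i = some q) (h' : y i' = some q')
    (hs : s ≤ 28) (hi : i < i') : position y P i q K s < position y P i' q' K' s := by
  rcases le_or_gt s 24 with h24 | h24
  · rw [position_of_le h24, position_of_le h24]
    linarith [(sweep_mem_Icc K s).2, (sweep_mem_Icc K' s).1]
  · have hdir := hy.strictMono h h' hi
    have hK : ∀ K, 0 ≤ sweep K 0 ∧ sweep K 0 ≤ 1 := by rintro (_ | _) <;> simp [sweep]
    rw [position_eq, position_eq, sweep_eq_sweep_zero K (by omega),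
      sweep_eq_sweep_zero K' (by omega)]
    obtain ⟨k, rfl⟩ := Nat.exists_eq_add_of_lt h24
    have hk : (24 + k + 1 - 24 : ℕ) = k + 1 := by omega
    have hKK' := And.intro (hK K) (hK K')
    rw [hk]
    obtain hk3 : k ≤ 3 := by omega
    interval_cases k <;> push_cast <;> omega

theorem position_lt_position_iff (hy : y.Safe) (h : y i = some q) (h' : y i' = some q')
    (hs : s ≤ 28) :
    position y P i q K s < position y P i' q' K' s ↔
      i < i' ∨ i = i' ∧ K = .wall ∧ K' = .sweeper := by
  have hsame : ∀ {K K'}, i = i' → position y P i q K s - position y P i' q' K' s =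
      sweep K s - sweep K' s := by
    rintro K K' rfl
    obtain rfl := Option.some.inj (h.symm.trans h')
    rw [position_eq, position_eq]
    ring
  rcases lt_trichotomy i i' with hi | hi | hi
  · simp [hi, position_lt_position_of_lt hy h h' hs hi]
  · rw [← sub_neg, hsame hi]
    cases K <;> cases K' <;>
      simp [hi, sweep_wall_lt_sweep_sweeper, (sweep_wall_lt_sweep_sweeper _).le]
  · simp [hi.not_gt, hi.ne', (position_lt_position_of_lt hy h' h hs hi).le]

theorem not_dies_simulator (hs : s < 28) :
    ¬ (simulator y P i q K s).role.Dies (script y P i q K s) := by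
  have hclk : ∀ {c : Fin 28}, tick s = c → s = c := fun h => by rw [← h, val_tick hs]
  rintro ⟨⟨hK, h | h | h⟩ | ⟨hK, h⟩, hsender⟩ <;> obtain rfl := hclk h <;> cases hK <;>
    exact hsender rfl

theorem step_simulator (hs : s < 27) : (simulator y P i q K s).step (script y P i q K s) =
    some (simulator y P i q K (s + 1)) := by
  have hclk : tick s ≠ 27 := fun h => by
    have := val_tick (hs.trans (by decide))
    rw [h] at this
    exact hs.ne this.symm
  rw [Particle.step_eq_some_iff, Role.step, if_neg (not_dies_simulator (by omega))]
  refine ⟨(if_neg hclk).trans (congrArg some (record_row (by omega))), ?_⟩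
  rw [simulator, action_row hs]
  rfl

theorem simulatedInput_simulator :
    (simulator y P i q .wall 27).role.simulatedInput = y.input i q := by
  rw [Role.simulatedInput, header_simulator (by decide), input]
  change (match q.role.src with
    | .own _ => Signal.mk none (q.cargo.chunk q.role.src.ownChunk)
    | .left => Signal.assemble (script y P i q .wall 10) (script y P i q .wall 11) .sweeper 10
    | .right => Signal.assemble (script y P i q .wall 22) (script y P i q .wall 23) .sweeper 22) = _
  rcases q.role.src with k | _ | _
  · rfl
  · exact assemble_shown y P .sweeper 10 (i - 1)
  · simp [Signal.assemble, Signal.IsFrom, script]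

theorem action_simulator :
    (simulator y P i q .sweeper 27).role.action = q.role.action := by
  change (simulator y P i q .sweeper 27).role.header.act.map
    (fun sender => Signal.mk sender (q.role.chunk 2)) = _
  rw [header_simulator (by decide)]
  rcases haction : q.role.action with _ | κ <;> simp [Role.chunk, haction]

theorem step_simulator_last (hq : q.step (y.input i q) = some q') :
    (simulator y P i q K 27).step (script y P i q K 27) =
      some ⟨.fresh K q.role.dir, q'.component K⟩ := by
  obtain ⟨hrole, hcargo⟩ := Particle.step_eq_some_iff.1 hq
  rw [Particle.step_eq_some_iff, Role.step, if_neg (not_dies_simulator (by decide)),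
    header_simulator (by decide)]
  refine ⟨if_pos rfl, ?_⟩
  cases K
  · change ((some (simulator y P i q .wall 27).role.simulatedInput).elim _ _) = _
    rw [simulatedInput_simulator]
    exact hrole
  · rw [action_simulator]
    exact hcargo

/-- `z` is what a configuration representing `y` becomes after `s ≤ 27` steps of a round: the
particle `q` of `y` in cell `i` is represented by the two particles of a box which starts at
cell `4 * i`. -/
structure Represents (y : Config) (P : ℤ → SignType) (s : ℕ) (z : Config) : Prop where
  eq_some : ∀ {i q}, y i = some q → ∀ K, z (position y P i q K s) = some (simulator y P i q K s)
  exists_of_eq_some : ∀ {p v}, z p = some v →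
    ∃ i q K, y i = some q ∧ p = position y P i q K s ∧ v = simulator y P i q K s

namespace Represents

theorem signalAt (hz : Represents y P s z) (hs : s ≤ 24) (hp : p = 4 * i + sweep K s) :
    z.signalAt p = (y i).elim default fun q => (simulator y P i q K s).role.signal := by
  rcases hi : y i with _ | q
  · suffices z p = none by rw [Config.signalAt, this]; rfl
    by_contra hne
    obtain ⟨v, hv⟩ := Option.ne_none_iff_exists'.1 hne
    obtain ⟨i', q', K', hi', hp', -⟩ := hz.exists_of_eq_some hv
    rw [position_of_le hs] at hp'
    have hK := sweep_mem_Icc K s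
    have hK' := sweep_mem_Icc K' s
    rw [Set.mem_Icc] at hK hK'
    obtain rfl : i = i' := by omega
    simp [hi] at hi'
  · rw [Config.signalAt, hp, ← position_of_le hs, hz.eq_some hi K]
    rfl

theorem signalAt_of_eq_some (hz : Represents y P s z) (h : y i = some q) (hs : s ≤ 24)
    (hp : p = 4 * i + sweep K s) : z.signalAt p = (simulator y P i q K s).role.signal := by
  rw [hz.signalAt hs hp, h]
  rfl

theorem input_wall (hz : Represents y P s z) (h : y i = some q) (hs : s < 28) :
    z.input (position y P i q .wall s) (simulator y P i q .wall s) = script y P i q .wall s := by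
  have hp : s ≤ 24 → position y P i q .wall s = 4 * i := fun hs => by
    rw [position_of_le hs, sweep, add_zero]
  have hright : s ≤ 24 → sweep .sweeper s = 1 → z.signalAt (position y P i q .wall s + 1) =
      (simulator y P i q .sweeper s).role.signal := fun hs hsweep =>
    hz.signalAt_of_eq_some h hs (by rw [hp hs, hsweep])
  have hassemble := assemble_shown y P .wall 10 (i + 1)
  interval_cases s <;> try rfl
  · exact hright (by decide) rfl
  · exact hz.signalAt (i := i - 1) (K := .sweeper) (by decide) (by simp [hp, sweep]; ring)
  · exact hz.signalAt (i := i - 1) (K := .sweeper) (by decide) (by simp [hp, sweep]; ring)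
  · exact (hright (by decide) rfl).trans (congrArg (fun ι : Signal =>
      Signal.mk _ { (default : Packet) with tag := ι.sender }) hassemble)
  · exact (hright (by decide) rfl).trans
      (congrArg (fun ι : Signal => Signal.mk _ ι.packet) hassemble)

theorem input_sweeper (hz : Represents y P s z) (h : y i = some q) (hs : s < 28) :
    z.input (position y P i q .sweeper s) (simulator y P i q .sweeper s) =
      script y P i q .sweeper s := by
  have hp : s ≤ 24 → position y P i q .sweeper s = 4 * i + sweep .sweeper s := position_of_le
  interval_cases s <;> try rfl
  · exact hz.signalAt_of_eq_some (K := .wall) h (by decide) (by simp [hp, sweep])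
  · exact hz.signalAt_of_eq_some (K := .wall) h (by decide) (by simp [hp, sweep])
  · exact hz.signalAt_of_eq_some (K := .wall) h (by decide) (by simp [hp, sweep])
  · exact hz.signalAt (i := i + 1) (K := .wall) (by decide) (by simp [hp, sweep]; ring)
  · exact hz.signalAt (i := i + 1) (K := .wall) (by decide) (by simp [hp, sweep]; ring)

theorem input_eq (hz : Represents y P s z) (h : y i = some q) (K : Kind) (hs : s < 28) :
    z.input (position y P i q K s) (simulator y P i q K s) = script y P i q K s := by
  cases K
  exacts [hz.input_wall h hs, hz.input_sweeper h hs]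

theorem safe (hz : Represents y P s z) (hy : y.Safe) (hs : s < 28) : z.Safe where
  exists_step := by
    intro p v hv
    obtain ⟨i, q, K, hi, rfl, rfl⟩ := hz.exists_of_eq_some hv
    rw [hz.input_eq hi K hs]
    rcases Nat.lt_succ_iff_lt_or_eq.1 hs with h27 | rfl
    · exact ⟨_, step_simulator h27⟩
    · obtain ⟨q', hq'⟩ := hy.exists_step hi
      exact ⟨_, step_simulator_last hq'⟩
  strictMono := by
    intro p p' v v' hv hv' hlt
    obtain ⟨i, q, K, hi, rfl, rfl⟩ := hz.exists_of_eq_some hv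
    obtain ⟨i', q', K', hi', rfl, rfl⟩ := hz.exists_of_eq_some hv'
    rw [position_add_dir hs, position_add_dir hs, position_lt_position_iff hy hi hi' (by omega)]
    exact (position_lt_position_iff hy hi hi' hs.le).1 hlt

theorem next_position (hz : Represents y P s z) (hy : y.Safe) (hs : s < 28) (hi : y i = some q)
    (hstep : (simulator y P i q K s).step (script y P i q K s) = some q') :
    z.next (position y P i q K (s + 1)) = some q' := by
  rw [← position_add_dir hs]
  exact (hz.safe hy hs).next_eq (hz.eq_some hi K) (by rwa [hz.input_eq hi K hs])

theorem exists_of_next_eq_some (hz : Represents y P s z) (hs : s < 28) (h : z.next p = some q') :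
    ∃ i q K, y i = some q ∧ p = position y P i q K (s + 1) ∧
      (simulator y P i q K s).step (script y P i q K s) = some q' := by
  obtain ⟨p₀, v, rfl, hv, hstep⟩ := Config.exists_of_next_eq_some h
  obtain ⟨i, q, K, hi, rfl, rfl⟩ := hz.exists_of_eq_some hv
  rw [hz.input_eq hi K hs] at hstep
  exact ⟨i, q, K, hi, position_add_dir hs, hstep⟩

theorem succ (hz : Represents y P s z) (hy : y.Safe) (hs : s < 27) :
    Represents y P (s + 1) z.next where
  eq_some hi _ := hz.next_position hy (by omega) hi (step_simulator hs)
  exists_of_eq_some h := by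
    obtain ⟨i, q, K, hi, hp, hstep⟩ := hz.exists_of_next_eq_some (by omega) h
    rw [step_simulator hs] at hstep
    exact ⟨i, q, K, hi, hp, (Option.some.inj hstep).symm⟩

theorem iterate (hz : Represents y P 0 z) (hy : y.Safe) (hs : s < 28) :
    Represents y P s (next^[s] z) := by
  induction s with
  | zero => exact hz
  | succ s ih =>
    rw [Function.iterate_succ_apply']
    exact (ih (by omega)).succ hy (by omega)

theorem last (hz : Represents y P 27 z) (hy : y.Safe) : ∃ P', Represents y.next P' 0 z.next := by
  have hnext : ∀ {i q q'}, y i = some q → q.step (y.input i q) = some q' → ∀ K P',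
      z.next (position y.next P' (i + q.role.dir) q' K 0) =
        some ⟨.fresh K q.role.dir, q'.component K⟩ := fun hi hq K P' => by
    rw [← position_twentyEight]
    exact hz.next_position hy (by decide) hi (step_simulator_last hq)
  have hlastDir : ∀ {i q q'}, y i = some q → q.step (y.input i q) = some q' →
      (z.next (4 * (i + q.role.dir))).elim 0 (fun v => v.role.lastDir) = q.role.dir :=
    fun hi hq => by
      have := hnext hi hq .wall P
      rw [position_of_le (Nat.zero_le _), sweep, add_zero] at this
      rw [this]
      rfl
  refine ⟨fun p => (z.next (4 * p)).elim 0 fun v => v.role.lastDir, ?_, ?_⟩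
  · intro p q' h K
    obtain ⟨i, q, rfl, hi, hq⟩ := Config.exists_of_next_eq_some h
    rw [hnext hi hq, simulator, row_zero, hlastDir hi hq]
  · intro p v h
    obtain ⟨i, q, K, hi, hp, hstep⟩ := hz.exists_of_next_eq_some (by decide) h
    obtain ⟨q', hq⟩ := hy.exists_step hi
    rw [step_simulator_last hq] at hstep
    refine ⟨_, q', K, hy.next_eq hi hq, hp.trans (position_twentyEight ..), ?_⟩
    rw [simulator, row_zero, hlastDir hi hq, ← Option.some.inj hstep]

end Represents

/-- The configuration `z` simulates `y`: every particle of `y` is represented by a box of `z`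
which is at the beginning of a round. -/
def Simulates (z y : Config) : Prop := ∃ P, Represents y P 0 z

theorem Simulates.iterate_twentyEight (h : z.Simulates y) (hy : y.Safe) :
    (next^[28] z).Simulates y.next := by
  obtain ⟨P, hz⟩ := h
  rw [Function.iterate_succ_apply' next 27]
  exact (hz.iterate hy (by decide)).last hy

theorem Simulates.iterate_mul (h : z.Simulates y) :
    ∀ a, (∀ t < a, (Config.next^[t] y).Safe) → (next^[28 * a] z).Simulates (next^[a] y)
  | 0, _ => h
  | a + 1, hy => by
    have := (Simulates.iterate_mul h a fun t ht => hy t (by omega)).iterate_twentyEight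
      (hy a (by omega))
    rwa [← Function.iterate_add_apply, ← Function.iterate_succ_apply' next,
      show 28 + 28 * a = 28 * (a + 1) by ring] at this

theorem exists_simulates (y : Config) : ∃ z, Simulates z y := by
  refine ⟨fun p => if p % 4 = 0 then (y (p / 4)).map fun q => ⟨.fresh .wall 0, q.role⟩
    else if p % 4 = 1 then (y (p / 4)).map fun q => ⟨.fresh .sweeper 0, q.cargo⟩ else none,
    fun _ => 0, ?_, ?_⟩
  · intro i q hi K
    rw [position_of_le (Nat.zero_le _), simulator, row_zero]
    cases K
    · simp [sweep, hi, Particle.component]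
    · have hdiv : (4 * i + 1) / 4 = i := by omega
      simp [sweep, hi, hdiv, Particle.component]
  · intro p v hv
    simp only [position_of_le (Nat.zero_le _), simulator, row_zero]
    split_ifs at hv with h0 h1 <;> obtain ⟨q, hq, rfl⟩ := Option.map_eq_some_iff.1 hv
    · exact ⟨p / 4, q, .wall, hq, by simp only [sweep]; omega, rfl⟩
    · exact ⟨p / 4, q, .sweeper, hq, by simp [sweep]; omega, rfl⟩

/-- A particle stays in cell `0` in the next step. -/
def RestsAtZero (x : Config) : Prop := ∃ q, x 0 = some q ∧ q.role.dir = 0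

theorem Simulates.safe_and_restsAtZero (h : z.Simulates y) (hy : y.Safe) (hrest : y.RestsAtZero)
    (hs : s < 28) : (next^[s] z).Safe ∧ (next^[s] z).RestsAtZero := by
  obtain ⟨P, hz⟩ := h
  obtain ⟨q, hq, hdir⟩ := hrest
  have hz := hz.iterate hy hs
  have hposition : ∀ s, position y P 0 q .wall s = 0 := fun s => by
    simp [position_eq, hdir, sweep]
  refine ⟨hz.safe hy hs, _, hposition s ▸ hz.eq_some hq .wall, ?_⟩
  have := position_add_dir (y := y) (P := P) (i := 0) (q := q) (K := .wall) hs
  rw [hposition, hposition, zero_add] at this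
  exact (by decide : ∀ d : SignType, (d : ℤ) = 0 → d = 0) _ this

theorem exists_forall_lt_safe_and_restsAtZero (k : ℕ) :
    ∃ x : Config, ∀ t < 28 ^ k, (next^[t] x).Safe ∧ (next^[t] x).RestsAtZero := by
  induction k with
  | zero =>
    refine ⟨fun p => if p = 0 then some ⟨.fresh .wall 0, .fresh .wall 0⟩ else none, fun t ht => ?_⟩
    obtain rfl : t = 0 := by simpa using ht
    rw [Function.iterate_zero_apply]
    refine ⟨⟨?_, ?_⟩, _, if_pos rfl, rfl⟩
    · rintro p q h
      split_ifs at h with hp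
      obtain rfl := Option.some.inj h
      exact ⟨_, rfl⟩
    · intro p p' q q' h h' hlt
      split_ifs at h with hp
      split_ifs at h' with hp'
      omega
  | succ k ih =>
    obtain ⟨y, hy⟩ := ih
    obtain ⟨z, hz⟩ := exists_simulates y
    refine ⟨z, fun t ht => ?_⟩
    have hlt : t / 28 < 28 ^ k := Nat.div_lt_of_lt_mul (by rwa [pow_succ'] at ht)
    have hsim := Simulates.iterate_mul hz (t / 28) fun t' ht' => (hy t' (ht'.trans hlt)).1
    have := hsim.safe_and_restsAtZero (hy _ hlt).1 (hy _ hlt).2 (Nat.mod_lt t (by decide))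
    rwa [← Function.iterate_add_apply, Nat.mod_add_div] at this

theorem exists_forall_lt_iterate_next_ne_none (N : ℕ) :
    ∃ x : Config, ∀ t < N, next^[t] x 0 ≠ none := by
  obtain ⟨x, hx⟩ := exists_forall_lt_safe_and_restsAtZero N
  refine ⟨x, fun t ht => ?_⟩
  obtain ⟨q, hq, -⟩ := (hx t (ht.trans (Nat.lt_pow_self (by decide)))).2
  exact Option.ne_none_iff_exists'.2 ⟨q, hq⟩

end Config

end Simulation

section CellularAutomaton

namespace Config

theorem emitted_congr {x y : Config} {i : ℤ} (left : x (i - 1) = y (i - 1)) (center : x i = y i)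
    (right : x (i + 1) = y (i + 1)) (d : SignType) : x.emitted i d = y.emitted i d := by
  simp only [emitted, input, signalAt, left, center, right]

theorem dependsOn_next (i : ℤ) : DependsOn (fun x => next x i) (Finset.Icc (i - 2) (i + 2)) := by
  intro (x : Config) (y : Config) h
  have cell_eq : ∀ j, i - 2 ≤ j → j ≤ i + 2 → x j = y j := fun j hj hj' =>
    h j (Finset.mem_coe.2 (Finset.mem_Icc.2 ⟨hj, hj'⟩))
  have emitted_eq : ∀ j d, i - 1 ≤ j → j ≤ i + 1 → x.emitted j d = y.emitted j d :=
    fun j d hj hj' => emitted_congr (cell_eq _ (by omega) (by omega))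
      (cell_eq _ (by omega) (by omega)) (cell_eq _ (by omega) (by omega)) d
  dsimp only [next]
  rw [emitted_eq i 0 (by omega) (by omega), emitted_eq (i - 1) 1 (by omega) (by omega),
    emitted_eq (i + 1) (-1) (by omega) (by omega)]

theorem emitted_shift (x : Config) (i : ℤ) (d : SignType) :
    emitted (fun j => x (j + 1)) i d = x.emitted (i + 1) d := by
  simp only [emitted, input, signalAt, sub_add_cancel, add_sub_cancel_right]

theorem next_shift (x : Config) : next (fun i => x (i + 1)) = fun i => x.next (i + 1) := by
  funext i
  simp only [next, emitted_shift, sub_add_cancel, add_sub_cancel_right]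

theorem next_empty : next (fun _ => none) = fun _ => none := rfl

end Config

variable {α : Type} (e : Option Particle ≃ α)

/-- The rule `Config.next` in the alphabet `α`. -/
def automaton (x : ℤ → α) : ℤ → α := fun i => e (Config.next (fun j => e.symm (x j)) i)

theorem automaton_shift (x : ℤ → α) :
    automaton e (fun i => x (i + 1)) = fun i => automaton e x (i + 1) :=
  funext fun i => congrArg e (congrFun (Config.next_shift fun j => e.symm (x j)) i)

theorem automaton_empty : automaton e (fun _ => e none) = fun _ => e none := by
  funext i
  simp [automaton, Config.next_empty]

theorem iterate_automaton (t : ℕ) (x : ℤ → α) :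
    (automaton e)^[t] x = fun i => e (Config.next^[t] (fun j => e.symm (x j)) i) := by
  have semiconj : Function.Semiconj (fun (y : ℤ → α) j => e.symm (y j)) (automaton e)
      Config.next := fun y => funext fun j => e.symm_apply_apply _
  funext i
  exact e.symm_apply_eq.1 (congrFun ((semiconj.iterate_right t).eq x) i)

theorem exists_forall_besicovitchDist_iterate_automaton_lt [DecidableEq α] {ε : ℝ} (hε : 0 < ε) :
    ∃ t : ℕ, ∀ x, besicovitchDist ((automaton e)^[t] x) (fun _ => e none) < ε := by
  obtain ⟨N, hN⟩ := exists_pow_lt_of_lt_one (half_pos hε) (one_half_lt_one (α := ℝ))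
  obtain ⟨c, t, hcard⟩ := Config.exists_pow_mul_card_ne_none_le N
  refine ⟨t, fun x => (besicovitchDist_le_of_card_le (a := 2 * (1 / 2) ^ N)
    (b := 2 * (1 / 2) ^ N * (c - 1)) fun n => ?_).trans_lt (by linarith)⟩
  have ne_empty_iff (i : ℤ) : (automaton e)^[t] x i ≠ e none ↔
      Config.next^[t] (fun j => e.symm (x j)) i ≠ none := by
    rw [iterate_automaton, ne_eq, e.apply_eq_iff_eq]
  simp only [ne_empty_iff]
  have hreal := (Int.cast_le (R := ℝ)).2 (hcard (fun j => e.symm (x j)) n)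
  push_cast at hreal
  rw [mul_comm, ← le_div_iff₀ (by positivity)] at hreal
  refine hreal.trans_eq ?_
  rw [one_div, inv_pow]
  ring

variable [TopologicalSpace α] [DiscreteTopology α]

theorem continuous_automaton : Continuous (automaton e) :=
  continuous_of_dependsOn_finite fun i => ⟨Finset.Icc (i - 2) (i + 2), fun _ _ h =>
    congrArg e (Config.dependsOn_next i fun j hj => congrArg e.symm (h j hj))⟩

theorem exists_forall_iterate_automaton_ne [CompactSpace α] :
    ∃ x, ∀ t, (automaton e)^[t] x 0 ≠ e none := by
  refine exists_forall_iterate_mem_of_finite_time (continuous_automaton e)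
    (isClosed_setOf_apply_ne 0 (e none))
    fun N => ?_
  obtain ⟨x, hx⟩ := Config.exists_forall_lt_iterate_next_ne_none N
  refine ⟨fun j => e (x j), fun t ht => ?_⟩
  simpa [iterate_automaton] using hx t ht

theorem not_uniquelyErgodic_automaton [CompactSpace α] [MeasurableSpace (ℤ → α)]
    [BorelSpace (ℤ → α)] [HasOuterApproxClosed (ℤ → α)] :
    ¬ ∃! μ : Measure (ℤ → α), IsProbabilityMeasure μ ∧
      ∀ A : Set (ℤ → α), MeasurableSet A → μ (automaton e ⁻¹' A) = μ A := by
  obtain ⟨x, hx⟩ := exists_forall_iterate_automaton_ne e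
  exact not_existsUnique_invariant_of_forall_iterate_mem (continuous_automaton e)
    (isClosed_setOf_apply_ne 0 (e none))
    hx (automaton_empty e) (fun h => h rfl)

end CellularAutomaton

end SelfSimulatingCA

/-- There exists a cellular automaton with a quiescent state which is
asymptotically nilpotent in density but not uniquely ergodic. -/
theorem exists_AND_not_uniquelyErgodic_CA :
    ∃ (m : ℕ) (B : Fin (m + 1)) (Φ : (ℤ → Fin (m + 1)) → (ℤ → Fin (m + 1))),
      Continuous Φ ∧
      (∀ x : ℤ → Fin (m + 1), Φ (fun i => x (i + 1)) = fun i => Φ x (i + 1)) ∧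
      Φ (fun _ => B) = (fun _ => B) ∧
      (∀ ε : ℝ, 0 < ε → ∃ n : ℕ, ∀ x : ℤ → Fin (m + 1),
          besicovitchDist (Φ^[n] x) (fun _ => B) < ε) ∧
      ¬ (∃! μ : Measure (ℤ → Fin (m + 1)), IsProbabilityMeasure μ ∧
          ∀ A : Set (ℤ → Fin (m + 1)), MeasurableSet A → μ (Φ ⁻¹' A) = μ A) := by
  obtain ⟨_ | m, ⟨e⟩⟩ := Finite.exists_equiv_fin (Option SelfSimulatingCA.Particle)
  · exact (e none).elim0
  · exact ⟨m, e none, SelfSimulatingCA.automaton e, SelfSimulatingCA.continuous_automaton e,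
      SelfSimulatingCA.automaton_shift e, SelfSimulatingCA.automaton_empty e,
      fun _ => SelfSimulatingCA.exists_forall_besicovitchDist_iterate_automaton_lt e,
      SelfSimulatingCA.not_uniquelyErgodic_automaton e⟩
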